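/- arXiv:2206.14447 — 10 statements merged into one kernel-verified Lean document; each statement's English description precedes it below -/
import Mathlib

section
/- There exists a constant C > 0 such that for every s ∈ [0,1] and all measurable u, v : ℝ^{d−1} × ℤ → ℂ with ‖u‖_s < ∞ and ‖v‖_s < ∞, the function B(ξ,λ) := ∫_{ℝ^{d−1}} Σ_{μ∈ℤ, μ≠0, μ≠λ} [μ(λ−μ)/((λ−μ)δ¹ + μδ³)] u(ξ−η, λ−μ) v(η,μ) dη satisfies ‖B‖_s ≤ C ‖u‖_s ‖v‖_s. -/
open MeasureTheory
open scoped ENNReal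

noncomputable section

/-- Squared norm of the analytic space `Y_s`, on the Fourier side:
`‖F‖_s² = ∫_{ℝ^{d−1}} Σ_{λ∈ℤ} e^{2s|(ξ,λ)|} ⟨(ξ,λ)⟩^{2d*} |F(ξ,λ)|² dξ`. -/
def YNormSq (d dstar : ℕ) (s : ℝ) (F : EuclideanSpace ℝ (Fin (d - 1)) × ℤ → ℂ) : ℝ≥0∞ :=
  ∫⁻ ξ : EuclideanSpace ℝ (Fin (d - 1)), ∑' l : ℤ,
    ENNReal.ofReal (Real.exp (2 * s * Real.sqrt (‖ξ‖ ^ 2 + (l : ℝ) ^ 2)) *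
      (1 + ‖ξ‖ ^ 2 + (l : ℝ) ^ 2) ^ dstar * ‖F (ξ, l)‖ ^ 2)

lemma cs_sq {α : Type*} [MeasurableSpace α] (ν : Measure α) {f g : α → ℝ≥0∞}
    (hf : Measurable f) (hg : Measurable g) :
    (∫⁻ a, f a * g a ∂ν) ^ 2 ≤ (∫⁻ a, f a ^ 2 ∂ν) * ∫⁻ a, g a ^ 2 ∂ν := by
  have h := ENNReal.lintegral_mul_le_Lp_mul_Lq ν Real.HolderConjugate.two_two
    hf.aemeasurable hg.aemeasurable
  simp only [Pi.mul_apply, ENNReal.rpow_two] at h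
  refine (pow_le_pow_left' h 2).trans ?_
  rw [mul_pow, ← ENNReal.rpow_two, ← ENNReal.rpow_two, ← ENNReal.rpow_mul, ← ENNReal.rpow_mul]
  simp

lemma add_sq_le_enn (a b : ℝ≥0∞) : (a + b) ^ 2 ≤ 2 * (a ^ 2 + b ^ 2) := by
  have h := ENNReal.rpow_add_le_mul_rpow_add_rpow a b (p := 2) (by norm_num)
  norm_num at h
  exact h

lemma abs_bound {G : Type*} [AddCommGroup G] [MeasurableSpace G] [MeasurableAdd₂ G]
    [MeasurableSub₂ G] (ν : Measure G) [SFinite ν] [ν.IsAddRightInvariant]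
    {U V g : G → ℝ≥0∞} (hU : Measurable U) (hV : Measurable V) (hg : Measurable g)
    (hev : ∀ p q, g (p - q) = g (q - p)) (K : ℝ≥0∞) :
    ∫⁻ p, (K * ∫⁻ q, U (p - q) * V q * (g q + g (p - q)) ∂ν) ^ 2 ∂ν
      ≤ (K ^ 2 * (4 * ∫⁻ q, g q ^ 2 ∂ν)) * (∫⁻ q, U q ^ 2 ∂ν) * ∫⁻ q, V q ^ 2 ∂ν := by
  have key : ∀ p, (K * ∫⁻ q, U (p - q) * V q * (g q + g (p - q)) ∂ν) ^ 2
      ≤ (K ^ 2 * (4 * ∫⁻ q, g q ^ 2 ∂ν)) * ∫⁻ q, U (p - q) ^ 2 * V q ^ 2 ∂ν := by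
    intro p
    have hsub : Measurable fun q : G => p - q := measurable_const.sub measurable_id
    have h1 := cs_sq ν (f := fun q => U (p - q) * V q) (g := fun q => g q + g (p - q))
      ((hU.comp hsub).mul hV) (hg.add (hg.comp hsub))
    have h2 : ∫⁻ q, (g q + g (p - q)) ^ 2 ∂ν ≤ 4 * ∫⁻ q, g q ^ 2 ∂ν := by
      calc _ ≤ ∫⁻ q, 2 * (g q ^ 2 + g (p - q) ^ 2) ∂ν := lintegral_mono fun q => add_sq_le_enn _ _
        _ = 2 * (∫⁻ q, g q ^ 2 ∂ν + ∫⁻ q, g (q - p) ^ 2 ∂ν) := by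
          rw [lintegral_const_mul _ (by fun_prop), lintegral_add_left (by fun_prop)]
          simp_rw [hev p]
        _ = _ := by
          rw [lintegral_sub_right_eq_self (fun q => g q ^ 2) p, ← two_mul, ← mul_assoc]
          norm_num
    rw [mul_pow]
    calc _ ≤ K ^ 2 * ((∫⁻ q, (U (p - q) * V q) ^ 2 ∂ν) * (4 * ∫⁻ q, g q ^ 2 ∂ν)) := by
          gcongr
          exact h1.trans (by gcongr)
      _ = _ := by simp_rw [mul_pow]; ring
  refine (lintegral_mono key).trans ?_
  have hm : Measurable fun z : G × G => U (z.1 - z.2) ^ 2 * V z.2 ^ 2 := by fun_prop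
  rw [lintegral_const_mul _ hm.lintegral_prod_right', lintegral_lintegral_swap hm.aemeasurable,
    mul_assoc (K ^ 2 * _)]
  refine mul_le_mul_right ?_ _
  have : ∀ q, ∫⁻ p, U (p - q) ^ 2 * V q ^ 2 ∂ν = (∫⁻ p, U p ^ 2 ∂ν) * V q ^ 2 := by
    intro q
    rw [lintegral_mul_const _ (by fun_prop), lintegral_sub_right_eq_self (fun q => U q ^ 2) q]
  exact (lintegral_congr this).trans_le (lintegral_const_mul _ (by fun_prop)).le

abbrev nuM (n : ℕ) : Measure (EuclideanSpace ℝ (Fin n) × ℤ) :=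
  (volume : Measure (EuclideanSpace ℝ (Fin n))).prod (Measure.count : Measure ℤ)

lemma iter_eq (n : ℕ) {F : EuclideanSpace ℝ (Fin n) × ℤ → ℝ≥0∞} (hF : Measurable F) :
    ∫⁻ ξ, ∑' l : ℤ, F (ξ, l) = ∫⁻ p, F p ∂(nuM n) := by
  rw [lintegral_prod _ hF.aemeasurable]
  simp_rw [lintegral_count]

/-- japanese bracket squared -/
def Jb {n : ℕ} (p : EuclideanSpace ℝ (Fin n) × ℤ) : ℝ := 1 + ‖p.1‖ ^ 2 + (p.2 : ℝ) ^ 2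

def Nn {n : ℕ} (p : EuclideanSpace ℝ (Fin n) × ℤ) : ℝ := Real.sqrt (‖p.1‖ ^ 2 + (p.2 : ℝ) ^ 2)

def ww {n : ℕ} (D : ℕ) (s : ℝ) (p : EuclideanSpace ℝ (Fin n) × ℤ) : ℝ :=
  Real.exp (s * Nn p) * Jb p ^ ((D : ℝ) / 2)

lemma Jb_one_le {n : ℕ} (p : EuclideanSpace ℝ (Fin n) × ℤ) : 1 ≤ Jb p := by
  unfold Jb; nlinarith [sq_nonneg ‖p.1‖, sq_nonneg (p.2 : ℝ)]

lemma Jb_meas {n : ℕ} : Measurable (Jb (n := n)) := by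
  unfold Jb
  have : Measurable fun p : EuclideanSpace ℝ (Fin n) × ℤ => (p.2 : ℝ) :=
    (measurable_of_countable _).comp measurable_snd
  fun_prop

lemma Nn_meas {n : ℕ} : Measurable (Nn (n := n)) := by
  unfold Nn
  have : Measurable fun p : EuclideanSpace ℝ (Fin n) × ℤ => (p.2 : ℝ) :=
    (measurable_of_countable _).comp measurable_snd
  fun_prop

lemma ww_meas {n : ℕ} (D : ℕ) (s : ℝ) : Measurable (ww (n := n) D s) := by
  unfold ww
  have := Jb_meas (n := n)
  have := Nn_meas (n := n)
  fun_prop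

lemma ww_nonneg {n : ℕ} (D : ℕ) (s : ℝ) (p : EuclideanSpace ℝ (Fin n) × ℤ) : 0 ≤ ww D s p := by
  have := Jb_one_le p
  unfold ww; positivity

lemma ww_sq {n : ℕ} (D : ℕ) (s : ℝ) (p : EuclideanSpace ℝ (Fin n) × ℤ) (z : ℂ) :
    ENNReal.ofReal (Real.exp (2 * s * Real.sqrt (‖p.1‖ ^ 2 + (p.2 : ℝ) ^ 2)) *
      (1 + ‖p.1‖ ^ 2 + (p.2 : ℝ) ^ 2) ^ D * ‖z‖ ^ 2) = (ENNReal.ofReal (ww D s p) * ‖z‖ₑ) ^ 2 := by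
  have hJ := Jb_one_le p
  rw [← ofReal_norm, ← ENNReal.ofReal_mul (ww_nonneg _ _ _), ← ENNReal.ofReal_pow
    (mul_nonneg (ww_nonneg _ _ _) (norm_nonneg _))]
  congr 1
  have h1 : (Jb p ^ ((D : ℝ) / 2)) ^ 2 = Jb p ^ D := by
    rw [← Real.rpow_natCast, ← Real.rpow_mul (by linarith), ← Real.rpow_natCast]
    congr 1; push_cast; ring
  have h2 : Real.exp (s * Nn p) ^ 2 = Real.exp (2 * s * Nn p) := by
    rw [← Real.exp_nat_mul]; congr 1; push_cast; ring
  unfold ww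
  rw [mul_pow, mul_pow, h1, h2]
  rfl

lemma YNormSq_eq (d D : ℕ) (s : ℝ) (F : EuclideanSpace ℝ (Fin (d - 1)) × ℤ → ℂ) :
    YNormSq d D s F = ∫⁻ ξ, ∑' l : ℤ, (ENNReal.ofReal (ww D s (ξ, l)) * ‖F (ξ, l)‖ₑ) ^ 2 := by
  unfold YNormSq
  simp_rw [← ww_sq]

lemma Nn_sub_le {n : ℕ} (p q : EuclideanSpace ℝ (Fin n) × ℤ) : Nn p ≤ Nn (p - q) + Nn q := by
  have e : ∀ a b : ℝ, ‖(⟨a, b⟩ : ℂ)‖ = Real.sqrt (a ^ 2 + b ^ 2) := by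
    intro a b
    rw [Complex.norm_def, Complex.normSq_mk]; congr 1; ring
  have h := norm_add_le (⟨‖(p - q).1‖, ((p - q).2 : ℝ)⟩ : ℂ) ⟨‖q.1‖, (q.2 : ℝ)⟩
  have h3 : ((⟨‖(p - q).1‖, ((p - q).2 : ℝ)⟩ : ℂ) + ⟨‖q.1‖, (q.2 : ℝ)⟩)
      = ⟨‖(p - q).1‖ + ‖q.1‖, (p.2 : ℝ)⟩ := by
    apply Complex.ext <;> simp
  rw [h3, e, e, e] at h
  refine le_trans ?_ h
  unfold Nn
  gcongr
  have := norm_add_le (p.1 - q.1) q.1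
  simpa using this

lemma Jb_le {n : ℕ} (p q : EuclideanSpace ℝ (Fin n) × ℤ) :
    Jb p ≤ 2 * (Jb (p - q) + Jb q) := by
  have h : ‖p.1‖ ≤ ‖(p - q).1‖ + ‖q.1‖ := by simpa using norm_add_le (p.1 - q.1) q.1
  have h2 : (p.2 : ℝ) = ((p - q).2 : ℝ) + q.2 := by simp
  unfold Jb
  rw [h2]
  nlinarith [sq_nonneg (((p - q).2 : ℝ) - q.2), sq_nonneg (‖(p - q).1‖ - ‖q.1‖), norm_nonneg p.1,
    pow_le_pow_left₀ (norm_nonneg p.1) h 2]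

lemma kern_half (m₀ : ℝ) (hm₀ : 0 ≤ m₀) (A B C₀ : ℝ) (hA : A ≠ 0) (hB : B ≠ 0) (hC₀ : 0 < C₀)
    (x y : ℝ) (hx : 1 ≤ |x|) (hxy : |x| ≤ |y|)
    (hs : 1 / |x * A + y * B| ≤ C₀ * |x| ^ m₀) :
    |x * y| / |x * A + y * B| ≤ (2 / |B| + C₀ * (2 * |A| / |B|)) * |x| ^ (m₀ + 2) := by
  have hA' : 0 < |A| := abs_pos.2 hA
  have hB' : 0 < |B| := abs_pos.2 hB
  have hx0 : 0 < |x| := by linarith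
  have hy0 : 0 < |y| := by linarith
  have hr : |x| ^ (m₀ + 2) = |x| ^ m₀ * |x| ^ 2 := by
    rw [Real.rpow_add hx0, Real.rpow_two]
  have hp0 : 0 < |x| ^ m₀ := by positivity
  by_cases hc : 2 * |A| * |x| ≤ |B| * |y|
  · have h1 : |B| * |y| / 2 ≤ |x * A + y * B| := by
      have := abs_sub_abs_le_abs_sub (y * B) (-(x * A))
      rw [abs_neg, abs_mul, abs_mul, sub_neg_eq_add, add_comm (y * B)] at this
      nlinarith
    have h2 : |x| ≤ |x| ^ (m₀ + 2) := by
      calc |x| = |x| ^ (1 : ℝ) := by simp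
        _ ≤ _ := Real.rpow_le_rpow_of_exponent_le hx (by linarith)
    calc |x * y| / |x * A + y * B| ≤ |x * y| / (|B| * |y| / 2) := by gcongr
      _ = 2 / |B| * |x| := by rw [abs_mul]; field_simp
      _ ≤ 2 / |B| * |x| ^ (m₀ + 2) := by gcongr
      _ ≤ _ := by
        gcongr
        have : 0 ≤ C₀ * (2 * |A| / |B|) := by positivity
        linarith
  · push Not at hc
    have hy : |y| ≤ 2 * |A| / |B| * |x| := by
      rw [div_mul_eq_mul_div, le_div_iff₀ hB']; linarith
    calc |x * y| / |x * A + y * B| = |x| * |y| * (1 / |x * A + y * B|) := by rw [abs_mul]; ring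
      _ ≤ |x| * (2 * |A| / |B| * |x|) * (C₀ * |x| ^ m₀) := by gcongr
      _ = C₀ * (2 * |A| / |B|) * |x| ^ (m₀ + 2) := by rw [hr]; ring
      _ ≤ _ := by
        gcongr
        have : 0 ≤ 2 / |B| := by positivity
        linarith

lemma kern_bound (m₀ : ℝ) (hm₀ : 0 ≤ m₀) (δ1 δ3 : ℝ) (hδ1 : δ1 ≠ 0) (hδ3 : δ3 ≠ 0)
    (C₀ : ℝ) (hC₀ : 0 < C₀)
    (hsmall : ∀ l₁ l₃ : ℤ, l₁ ≠ 0 → l₃ ≠ 0 →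
      1 / |(l₁ : ℝ) * δ1 + (l₃ : ℝ) * δ3| ≤ C₀ * min (|(l₁ : ℝ)| ^ m₀) (|(l₃ : ℝ)| ^ m₀)) :
    ∃ K > 0, ∀ k l : ℤ, k ≠ 0 → l ≠ 0 →
      |(l : ℝ) * k| / |(k : ℝ) * δ1 + l * δ3| ≤ K * min |(k : ℝ)| |(l : ℝ)| ^ (m₀ + 2) := by
  have h1 : 0 < |δ1| := abs_pos.2 hδ1
  have h3 : 0 < |δ3| := abs_pos.2 hδ3
  have p1 : 0 < 2 / |δ3| + C₀ * (2 * |δ1| / |δ3|) := by positivity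
  have p2 : 0 < 2 / |δ1| + C₀ * (2 * |δ3| / |δ1|) := by positivity
  have one : ∀ k : ℤ, k ≠ 0 → 1 ≤ |(k : ℝ)| := fun k hk => by
    exact_mod_cast Int.one_le_abs hk
  refine ⟨(2 / |δ3| + C₀ * (2 * |δ1| / |δ3|)) + (2 / |δ1| + C₀ * (2 * |δ3| / |δ1|)), by positivity,
    fun k l hk hl => ?_⟩
  have hs := hsmall k l hk hl
  rcases le_total |(k : ℝ)| |(l : ℝ)| with h | h
  · have := kern_half m₀ hm₀ δ1 δ3 C₀ hδ1 hδ3 hC₀ k l (one k hk) h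
      (hs.trans (by gcongr; exact min_le_left _ _))
    rw [min_eq_left h, mul_comm (l : ℝ)]
    exact this.trans (mul_le_mul_of_nonneg_right (by linarith) (by positivity))
  · have := kern_half m₀ hm₀ δ3 δ1 C₀ hδ3 hδ1 hC₀ l k (one l hl) h
      (by rw [add_comm]; exact hs.trans (by gcongr; exact min_le_right _ _))
    rw [min_eq_right h, add_comm ((k : ℝ) * _)]
    exact this.trans (mul_le_mul_of_nonneg_right (by linarith) (by positivity))

/-- decaying weight -/
def gg {n : ℕ} (σ : ℝ) (p : EuclideanSpace ℝ (Fin n) × ℤ) : ℝ := Jb p ^ (-σ / 2)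

lemma gg_nonneg {n : ℕ} (σ : ℝ) (p : EuclideanSpace ℝ (Fin n) × ℤ) : 0 ≤ gg σ p := by
  have := Jb_one_le p
  unfold gg; positivity

lemma point_half {m : ℝ} (hm : 0 ≤ m) (D : ℕ) (J J1 J2 k x : ℝ) (h0 : 0 ≤ J) (h1 : 1 ≤ J1)
    (h12 : J1 ≤ J2) (hJ : J ≤ 2 * (J1 + J2)) (hk : 0 ≤ k)
    (hx0 : 0 ≤ x) (hx : x ^ 2 ≤ J1) :
    J ^ ((D : ℝ) / 2) * (k * x ^ m) ≤
      (k * 2 ^ D) * (J1 ^ ((D : ℝ) / 2) * J2 ^ ((D : ℝ) / 2) * J1 ^ (-((D : ℝ) - m) / 2)) := by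
  have e1 : J ^ ((D : ℝ) / 2) ≤ 2 ^ D * J2 ^ ((D : ℝ) / 2) := by
    calc J ^ ((D : ℝ) / 2) ≤ (2 ^ 2 * J2) ^ ((D : ℝ) / 2) := by
          gcongr; linarith
      _ = _ := by
          rw [Real.mul_rpow (by norm_num) (by linarith), ← Real.rpow_natCast, ← Real.rpow_mul (by norm_num),
            ← Real.rpow_natCast 2 D]
          congr 2; push_cast; ring
  have e2 : x ^ m ≤ J1 ^ ((D : ℝ) / 2) * J1 ^ (-((D : ℝ) - m) / 2) := by
    rw [← Real.rpow_add (by linarith)]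
    calc x ^ m = (x ^ 2) ^ (m / 2) := by
          rw [← Real.rpow_natCast, ← Real.rpow_mul hx0]; congr 1; push_cast; ring
      _ ≤ J1 ^ (m / 2) := by gcongr
      _ = _ := by congr 1; ring
  calc _ ≤ 2 ^ D * J2 ^ ((D : ℝ) / 2) * (k * (J1 ^ ((D : ℝ) / 2) * J1 ^ (-((D : ℝ) - m) / 2))) := by
        have : 0 ≤ J2 := by linarith
        gcongr
    _ = _ := by ring

lemma point_bound {n : ℕ} {m : ℝ} (hm : 0 ≤ m) (D : ℕ) (s : ℝ) (hs : 0 ≤ s) (k : ℝ) (hk : 0 ≤ k)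
    (p q : EuclideanSpace ℝ (Fin n) × ℤ) :
    ww D s p * (k * min |((p - q).2 : ℝ)| |(q.2 : ℝ)| ^ m) ≤
      (k * 2 ^ D) * (ww D s (p - q) * ww D s q * (gg (D - m) q + gg (D - m) (p - q))) := by
  have hJ := Jb_le p q
  have h0 := Jb_one_le p
  have h1 := Jb_one_le (p - q)
  have h2 := Jb_one_le q
  have hN : Real.exp (s * Nn p) ≤ Real.exp (s * Nn (p - q)) * Real.exp (s * Nn q) := by
    rw [← Real.exp_add, ← mul_add]
    gcongr
    exact Nn_sub_le p q
  have sqJ : ∀ r : EuclideanSpace ℝ (Fin n) × ℤ, |(r.2 : ℝ)| ^ 2 ≤ Jb r := by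
    intro r
    rw [sq_abs]; unfold Jb; nlinarith [sq_nonneg ‖r.1‖]
  set x := min |((p - q).2 : ℝ)| |(q.2 : ℝ)| with hx
  have hx0 : 0 ≤ x := by positivity
  have hx1 : x ^ 2 ≤ Jb (p - q) := le_trans (by gcongr; exact min_le_left _ _) (sqJ _)
  have hx2 : x ^ 2 ≤ Jb q := le_trans (by gcongr; exact min_le_right _ _) (sqJ _)
  have main : Jb p ^ ((D : ℝ) / 2) * (k * x ^ m) ≤ (k * 2 ^ D) *
      (Jb (p - q) ^ ((D : ℝ) / 2) * Jb q ^ ((D : ℝ) / 2) * (gg (D - m) q + gg (D - m) (p - q))) := by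
    have g1 := gg_nonneg (D - m) q
    have g2 := gg_nonneg (D - m) (p - q)
    rcases le_total (Jb (p - q)) (Jb q) with h | h
    · refine (point_half hm D _ _ _ k x (by linarith) h1 h hJ hk hx0 hx1).trans ?_
      change _ * (_ * gg (D - m) (p - q)) ≤ _
      gcongr
      linarith
    · refine (point_half hm D _ _ _ k x (by linarith) h2 h (by linarith) hk hx0 hx2).trans ?_
      change _ * (_ * gg (D - m) q) ≤ _
      rw [mul_comm (Jb q ^ _)]
      gcongr
      linarith
  unfold ww
  calc _ = Real.exp (s * Nn p) * (Jb p ^ ((D : ℝ) / 2) * (k * x ^ m)) := by ring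
    _ ≤ _ := mul_le_mul hN main (by positivity) (by positivity)
    _ = _ := by ring

lemma gg_fin (n : ℕ) (σ : ℝ) (hσ : (n : ℝ) + 2 < 2 * σ) :
    ∫⁻ p, ENNReal.ofReal (gg (n := n) σ p) ^ 2 ∂(nuM n) ≠ ⊤ := by
  have hle : ∀ p : EuclideanSpace ℝ (Fin n) × ℤ, ENNReal.ofReal (gg (n := n) σ p) ^ 2 ≤
      ENNReal.ofReal ((1 + ‖p.1‖ ^ 2) ^ (-(2 * σ - 2) / 2)) *
        ENNReal.ofReal ((1 + (p.2 : ℝ) ^ 2)⁻¹) := by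
    intro p
    have hJ := Jb_one_le p
    have a1 : 0 < 1 + ‖p.1‖ ^ 2 := by positivity
    have a2 : 0 < 1 + (p.2 : ℝ) ^ 2 := by positivity
    rw [← ENNReal.ofReal_pow (gg_nonneg _ _), ← ENNReal.ofReal_mul (by positivity)]
    apply ENNReal.ofReal_le_ofReal
    have : gg σ p ^ 2 = Jb p ^ (-(2 * σ - 2) / 2) * Jb p ^ (-1 : ℝ) := by
      unfold gg
      rw [← Real.rpow_natCast, ← Real.rpow_mul (by linarith), ← Real.rpow_add (by linarith)]
      congr 1; push_cast; ring
    rw [this, ← Real.rpow_neg_one (1 + (p.2 : ℝ) ^ 2)]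
    have hn : (0 : ℝ) ≤ n := by positivity
    apply mul_le_mul _ _ (by positivity) (by positivity)
    · apply Real.rpow_le_rpow_of_nonpos a1 _ (by linarith)
      unfold Jb; nlinarith [sq_nonneg (p.2 : ℝ)]
    · apply Real.rpow_le_rpow_of_nonpos a2 _ (by norm_num)
      unfold Jb; nlinarith [sq_nonneg ‖p.1‖]
  refine ne_top_of_le_ne_top ?_ (lintegral_mono hle)
  have hi : Integrable (fun x : EuclideanSpace ℝ (Fin n) => (1 + ‖x‖ ^ 2) ^ (-(2 * σ - 2) / 2)) :=
    integrable_rpow_neg_one_add_norm_sq (by simp; linarith)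
  have hsum : Summable fun l : ℤ => (1 + (l : ℝ) ^ 2)⁻¹ := by
    have h2 : Summable fun l : ℤ => 1 / (l : ℝ) ^ 2 := Real.summable_one_div_int_pow.2 (by norm_num)
    refine Summable.of_norm_bounded_eventually h2 ?_
    refine (Set.finite_singleton (0 : ℤ)).subset ?_
    intro l hl
    by_contra h0
    apply hl
    have : (0 : ℝ) < (l : ℝ) ^ 2 := by
      have : (l : ℝ) ≠ 0 := by exact_mod_cast h0
      positivity
    change ‖(1 + (l : ℝ) ^ 2)⁻¹‖ ≤ 1 / (l : ℝ) ^ 2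
    rw [Real.norm_of_nonneg (by positivity), ← one_div]
    gcongr
    linarith
  rw [lintegral_prod_mul (f := fun x : EuclideanSpace ℝ (Fin n) =>
    ENNReal.ofReal ((1 + ‖x‖ ^ 2) ^ (-(2 * σ - 2) / 2))) (g := fun l : ℤ =>
    ENNReal.ofReal ((1 + (l : ℝ) ^ 2)⁻¹)) (by fun_prop) (measurable_of_countable _).aemeasurable,
    lintegral_count]
  exact ENNReal.mul_ne_top hi.lintegral_lt_top.ne hsum.tsum_ofReal_ne_top


def UU {n : ℕ} (D : ℕ) (s : ℝ) (u : EuclideanSpace ℝ (Fin n) × ℤ → ℂ)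
    (p : EuclideanSpace ℝ (Fin n) × ℤ) : ℝ≥0∞ := ENNReal.ofReal (ww D s p) * ‖u p‖ₑ

def GG {n : ℕ} (σ : ℝ) (p : EuclideanSpace ℝ (Fin n) × ℤ) : ℝ≥0∞ := ENNReal.ofReal (gg σ p)

lemma UU_meas {n : ℕ} (D : ℕ) (s : ℝ) {u : EuclideanSpace ℝ (Fin n) × ℤ → ℂ}
    (hu : Measurable u) : Measurable (UU D s u) := by
  have hwm := ww_meas (n := n) D s
  unfold UU
  fun_prop

lemma GG_meas {n : ℕ} (σ : ℝ) : Measurable (GG (n := n) σ) := by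
  have := Jb_meas (n := n)
  have : Measurable (gg (n := n) σ) := by unfold gg; fun_prop
  unfold GG
  fun_prop

lemma GG_even {n : ℕ} (σ : ℝ) (p q : EuclideanSpace ℝ (Fin n) × ℤ) :
    GG σ (p - q) = GG σ (q - p) := by
  have : Jb (p - q) = Jb (q - p) := by
    unfold Jb
    simp only [Prod.fst_sub, Prod.snd_sub, norm_sub_rev p.1 q.1]
    push_cast; ring
  simp only [GG, gg, this]

lemma term_bound {n : ℕ} {m : ℝ} (hm : 0 ≤ m) (D : ℕ) (s : ℝ) (hs : 0 ≤ s) (k : ℝ) (hk : 0 ≤ k)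
    (u v : EuclideanSpace ℝ (Fin n) × ℤ → ℂ) (p q : EuclideanSpace ℝ (Fin n) × ℤ) (c : ℂ)
    (hc : ‖c‖ ≤ k * min |((p - q).2 : ℝ)| |(q.2 : ℝ)| ^ m) :
    ENNReal.ofReal (ww D s p) * ‖c * u (p - q) * v q‖ₑ ≤ ENNReal.ofReal (k * 2 ^ D) *
      (UU D s u (p - q) * UU D s v q * (GG (D - m) q + GG (D - m) (p - q))) := by
  have hpb := point_bound hm D s hs k hk p q
  have hw0 := ww_nonneg D s p
  have hfin' := ENNReal.ofReal_le_ofReal ((mul_le_mul_of_nonneg_left hc hw0).trans hpb)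
  rw [ENNReal.ofReal_mul hw0, ofReal_norm, ENNReal.ofReal_mul (by positivity),
    ENNReal.ofReal_mul (mul_nonneg (ww_nonneg _ _ _) (ww_nonneg _ _ _)),
    ENNReal.ofReal_mul (ww_nonneg _ _ _),
    ENNReal.ofReal_add (gg_nonneg _ _) (gg_nonneg _ _)] at hfin'
  rw [enorm_mul, enorm_mul]
  unfold UU GG
  calc _ = (ENNReal.ofReal (ww D s p) * ‖c‖ₑ) * (‖u (p - q)‖ₑ * ‖v q‖ₑ) := by ring
    _ ≤ _ := mul_le_mul_left hfin' _
    _ = _ := by ring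

lemma kern_norm (k : ℝ) (m : ℝ) (δ1 δ3 : ℝ) (l μ : ℤ)
    (h : |(μ : ℝ) * (l - μ : ℤ)| / |((l - μ : ℤ) : ℝ) * δ1 + μ * δ3| ≤
      k * min |((l - μ : ℤ) : ℝ)| |(μ : ℝ)| ^ m) :
    ‖(((μ * (l - μ) : ℤ) : ℂ) / ((((l - μ : ℤ) : ℝ) * δ1 + (μ : ℝ) * δ3 : ℝ) : ℂ))‖
      ≤ k * min |((l - μ : ℤ) : ℝ)| |(μ : ℝ)| ^ m := by
  rw [norm_div, Complex.norm_real, Complex.norm_intCast, Real.norm_eq_abs, Int.cast_mul]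
  exact h

/-- The pointwise bound on the bilinear operator. -/
lemma B_bound {n : ℕ} {m : ℝ} (hm : 0 ≤ m) (D : ℕ) (s : ℝ) (hs : 0 ≤ s) (k : ℝ) (hk : 0 ≤ k)
    {u v : EuclideanSpace ℝ (Fin n) × ℤ → ℂ} (hu : Measurable u) (hv : Measurable v)
    (p : EuclideanSpace ℝ (Fin n) × ℤ) (c : ℤ → ℂ)
    (hc : ∀ μ : ℤ, ¬ (μ = 0 ∨ μ = p.2) →
      ‖c μ‖ ≤ k * min |((p.2 - μ : ℤ) : ℝ)| |(μ : ℝ)| ^ m) :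
    ENNReal.ofReal (ww D s p) * ‖∫ η, ∑' μ : ℤ, if μ = 0 ∨ μ = p.2 then 0 else
      c μ * u (p.1 - η, p.2 - μ) * v (η, μ)‖ₑ ≤ ENNReal.ofReal (k * 2 ^ D) *
      ∫⁻ q, UU D s u (p - q) * UU D s v q * (GG (D - m) q + GG (D - m) (p - q)) ∂(nuM n) := by
  have hsub : Measurable fun q : EuclideanSpace ℝ (Fin n) × ℤ => p - q :=
    measurable_const.sub measurable_id
  have hm' : Measurable fun q => UU D s u (p - q) * UU D s v q *
      (GG (D - m) q + GG (D - m) (p - q)) :=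
    (((UU_meas D s hu).comp hsub).mul (UU_meas D s hv)).mul
      ((GG_meas _).add ((GG_meas _).comp hsub))
  rw [← iter_eq n hm', ← lintegral_const_mul' _ _ ENNReal.ofReal_ne_top]
  refine (mul_le_mul_right (enorm_integral_le_lintegral_enorm _) _).trans ?_
  rw [← lintegral_const_mul' _ _ ENNReal.ofReal_ne_top]
  refine lintegral_mono fun η => ?_
  refine (mul_le_mul_right enorm_tsum_le_tsum_enorm _).trans ?_
  rw [← ENNReal.tsum_mul_left, ← ENNReal.tsum_mul_left]
  refine ENNReal.tsum_le_tsum fun μ => ?_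
  by_cases hμ : μ = 0 ∨ μ = p.2
  · rw [if_pos hμ]; simp
  · rw [if_neg hμ]
    exact term_bound hm D s hs k hk u v p (η, μ) (c μ) (hc μ hμ)

lemma YNormSq_UU (d D : ℕ) (s : ℝ) {u : EuclideanSpace ℝ (Fin (d - 1)) × ℤ → ℂ}
    (hu : Measurable u) : YNormSq d D s u = ∫⁻ p, UU D s u p ^ 2 ∂(nuM (d - 1)) := by
  rw [YNormSq_eq, ← iter_eq (d - 1) ((UU_meas D s hu).pow_const 2)]
  rfl

lemma exists_C (X : ℝ≥0∞) (hX : X ≠ ⊤) : ∃ C > 0, X ≤ ENNReal.ofReal (C ^ 2) := by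
  refine ⟨Real.sqrt X.toReal + 1, by positivity, ?_⟩
  rw [ENNReal.le_ofReal_iff_toReal_le hX (by positivity)]
  nlinarith [Real.sq_sqrt (ENNReal.toReal_nonneg (a := X)), Real.sqrt_nonneg X.toReal]

lemma YNormSq_bound (d D : ℕ) (s σ : ℝ) {u v F : EuclideanSpace ℝ (Fin (d - 1)) × ℤ → ℂ}
    (hu : Measurable u) (hv : Measurable v) (K : ℝ≥0∞)
    (h : ∀ p, ENNReal.ofReal (ww D s p) * ‖F p‖ₑ ≤ K *
      ∫⁻ q, UU D s u (p - q) * UU D s v q * (GG σ q + GG σ (p - q)) ∂(nuM (d - 1))) :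
    YNormSq d D s F ≤ (K ^ 2 * (4 * ∫⁻ q, GG σ q ^ 2 ∂(nuM (d - 1)))) *
      YNormSq d D s u * YNormSq d D s v := by
  have hU := UU_meas D s hu
  have hV := UU_meas D s hv
  have hg := GG_meas (n := d - 1) σ
  have hm : Measurable fun z : (EuclideanSpace ℝ (Fin (d - 1)) × ℤ) ×
      (EuclideanSpace ℝ (Fin (d - 1)) × ℤ) =>
      UU D s u (z.1 - z.2) * UU D s v z.2 * (GG σ z.2 + GG σ (z.1 - z.2)) := by fun_prop
  have main := abs_bound (nuM (d - 1)) hU hV hg (GG_even σ) K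
  rw [← iter_eq (d - 1) ((hm.lintegral_prod_right'.const_mul K).pow_const 2)] at main
  rw [YNormSq_UU d D s hu, YNormSq_UU d D s hv, YNormSq_eq]
  refine le_trans ?_ main
  exact lintegral_mono fun ξ => ENNReal.tsum_le_tsum fun l => pow_le_pow_left' (h (ξ, l)) 2

/-- **Proposition 3.6** (Fourier side): the bilinear operator with the small-divisor
kernel `μ(λ−μ)/((λ−μ)δ¹ + μδ³)` is bounded on `Y_s`, uniformly in `s ∈ [0,1]`:
`‖B[u,v]‖_s ≤ C ‖u‖_s ‖v‖_s`, stated here with squared norms. -/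
theorem stmt1 (d dstar : ℕ) (hd : 2 ≤ d) (m₀ : ℝ) (hm₀ : 0 ≤ m₀)
    (hdstar : m₀ + 2 + ((d : ℝ) + 1) / 2 < (dstar : ℝ))
    (δ1 δ3 : ℝ) (hδ1 : δ1 ≠ 0) (hδ3 : δ3 ≠ 0)
    (hne : ∀ l₁ l₃ : ℤ, l₁ ≠ 0 → l₃ ≠ 0 → (l₁ : ℝ) * δ1 + (l₃ : ℝ) * δ3 ≠ 0)
    (C₀ : ℝ) (hC₀ : 0 < C₀)
    (hsmall : ∀ l₁ l₃ : ℤ, l₁ ≠ 0 → l₃ ≠ 0 →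
      1 / |(l₁ : ℝ) * δ1 + (l₃ : ℝ) * δ3| ≤ C₀ * min (|(l₁ : ℝ)| ^ m₀) (|(l₃ : ℝ)| ^ m₀)) :
    ∃ C > 0, ∀ s ∈ Set.Icc (0 : ℝ) 1,
      ∀ u v : EuclideanSpace ℝ (Fin (d - 1)) × ℤ → ℂ,
        Measurable u → Measurable v →
        YNormSq d dstar s u ≠ ⊤ → YNormSq d dstar s v ≠ ⊤ →
        YNormSq d dstar s (fun p => ∫ η, ∑' μ : ℤ,
            if μ = 0 ∨ μ = p.2 then 0 else
              (((μ * (p.2 - μ) : ℤ) : ℂ) /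
                  ((((p.2 - μ : ℤ) : ℝ) * δ1 + (μ : ℝ) * δ3 : ℝ) : ℂ)) *
                u (p.1 - η, p.2 - μ) * v (η, μ))
          ≤ ENNReal.ofReal (C ^ 2) * YNormSq d dstar s u * YNormSq d dstar s v := by
  obtain ⟨k, hk, hkern⟩ := kern_bound m₀ hm₀ δ1 δ3 hδ1 hδ3 C₀ hC₀ hsmall
  have hgfin := gg_fin (d - 1) ((dstar : ℝ) - (m₀ + 2)) (by
    rw [Nat.cast_sub (by omega)]; push_cast; linarith)
  obtain ⟨C, hC, hCX⟩ := exists_C (ENNReal.ofReal (k * 2 ^ dstar) ^ 2 *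
      (4 * ∫⁻ q, GG ((dstar : ℝ) - (m₀ + 2)) q ^ 2 ∂(nuM (d - 1))))
    (ENNReal.mul_ne_top (ENNReal.pow_ne_top ENNReal.ofReal_ne_top)
      (ENNReal.mul_ne_top (by norm_num) hgfin))
  refine ⟨C, hC, ?_⟩
  intro s hs u v hu hv _ _
  refine (YNormSq_bound d dstar s ((dstar : ℝ) - (m₀ + 2)) hu hv
    (ENNReal.ofReal (k * 2 ^ dstar)) (fun p => ?_)).trans
    (mul_le_mul_left (mul_le_mul_left hCX _) _)
  refine B_bound (by linarith) dstar s hs.1 k hk.le hu hv p (fun μ : ℤ =>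
    (((μ * (p.2 - μ) : ℤ) : ℂ) / ((((p.2 - μ : ℤ) : ℝ) * δ1 + (μ : ℝ) * δ3 : ℝ) : ℂ))) ?_
  intro μ hμ
  push Not at hμ
  exact kern_norm k (m₀ + 2) δ1 δ3 p.2 μ
    (hkern (p.2 - μ) μ (sub_ne_zero.2 (Ne.symm hμ.2)) hμ.1)

end
end

section
/- Let δ₁, δ₃ be nonzero real numbers, m̃₀ ≥ 0 a real number and C₀ > 0, and assume that λ₁δ₁ + λ₃δ₃ ≠ 0 for all nonzero integers λ₁, λ₃ and that 1/|λ₁δ₁ + λ₃δ₃| ≤ C₀ (λ₁² + λ₃²)^{m̃₀/2} for all nonzero integers λ₁, λ₃. Then there exists a constant C > 0 such that for all nonzero integers λ₁, λ₃: 1/|λ₁δ₁ + λ₃δ₃| ≤ C min(|λ₁|^{m̃₀}, |λ₃|^{m̃₀}). -/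
theorem aux_ratio (x y d e : ℝ) (hx : 1 ≤ |x|) (he : e ≠ 0) (h : |x * d + y * e| < 1) :
    |y| ≤ (1 + |d|) / |e| * |x| := by
  have he' : 0 < |e| := abs_pos.mpr he
  have h1 : |y| * |e| ≤ 1 + |x| * |d| := by
    rw [← abs_mul, ← abs_mul]
    have : |y * e| ≤ |x * d + y * e| + |x * d| := by
      have := abs_sub (x * d + y * e) (x * d)
      simpa using this
    linarith
  rw [div_mul_eq_mul_div, le_div_iff₀ he']
  nlinarith

/-- **Lemma 3.7** (reformulation of the small-divisors assumption): a polynomial upper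
bound `1/|λ₁δ₁ + λ₃δ₃| ≤ C₀ (λ₁² + λ₃²)^{m̃₀/2}` can be upgraded to a bound by the
minimum, `C min(|λ₁|, |λ₃|)^{m̃₀}`. -/
theorem stmt2 (δ₁ δ₃ : ℝ) (hδ₁ : δ₁ ≠ 0) (hδ₃ : δ₃ ≠ 0)
    (m₀ : ℝ) (hm₀ : 0 ≤ m₀) (C₀ : ℝ) (hC₀ : 0 < C₀)
    (hne : ∀ l₁ l₃ : ℤ, l₁ ≠ 0 → l₃ ≠ 0 → (l₁ : ℝ) * δ₁ + (l₃ : ℝ) * δ₃ ≠ 0)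
    (hub : ∀ l₁ l₃ : ℤ, l₁ ≠ 0 → l₃ ≠ 0 →
      1 / |(l₁ : ℝ) * δ₁ + (l₃ : ℝ) * δ₃| ≤ C₀ * (((l₁ : ℝ) ^ 2 + (l₃ : ℝ) ^ 2) ^ (m₀ / 2))) :
    ∃ C > 0, ∀ l₁ l₃ : ℤ, l₁ ≠ 0 → l₃ ≠ 0 →
      1 / |(l₁ : ℝ) * δ₁ + (l₃ : ℝ) * δ₃| ≤ C * (min |(l₁ : ℝ)| |(l₃ : ℝ)|) ^ m₀ := by
  have h1 : 0 < |δ₁| := abs_pos.mpr hδ₁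
  have h3 : 0 < |δ₃| := abs_pos.mpr hδ₃
  set K₁ := (1 + |δ₁|) / |δ₃| with hK₁
  set K₃ := (1 + |δ₃|) / |δ₁| with hK₃
  have k1 : 0 < K₁ := by positivity
  have k3 : 0 < K₃ := by positivity
  refine ⟨1 + C₀ * (1 + K₁ + K₃) ^ m₀, by positivity, fun a b ha hb => ?_⟩
  have ha1 : (1 : ℝ) ≤ |(a : ℝ)| := by exact_mod_cast Int.one_le_abs ha
  have hb1 : (1 : ℝ) ≤ |(b : ℝ)| := by exact_mod_cast Int.one_le_abs hb
  have hm1 : 1 ≤ min |(a : ℝ)| |(b : ℝ)| := le_min ha1 hb1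
  have hmp : 1 ≤ (min |(a : ℝ)| |(b : ℝ)|) ^ m₀ := Real.one_le_rpow hm1 hm₀
  have hA : 0 < C₀ * (1 + K₁ + K₃) ^ m₀ := by positivity
  rcases le_or_gt 1 |(a : ℝ) * δ₁ + (b : ℝ) * δ₃| with hs | hs
  · have : 1 / |(a : ℝ) * δ₁ + (b : ℝ) * δ₃| ≤ 1 := by
      rw [div_le_one (by linarith)]; exact hs
    nlinarith
  · have r1 : |(b : ℝ)| ≤ K₁ * |(a : ℝ)| := aux_ratio _ _ _ _ ha1 hδ₃ hs
    have r3 : |(a : ℝ)| ≤ K₃ * |(b : ℝ)| :=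
      aux_ratio _ _ _ _ hb1 hδ₁ (by rwa [add_comm] at hs)
    have hq : (a : ℝ) ^ 2 + (b : ℝ) ^ 2 ≤ ((1 + K₁ + K₃) * min |(a : ℝ)| |(b : ℝ)|) ^ 2 := by
      rw [← sq_abs (a : ℝ), ← sq_abs (b : ℝ)]
      generalize |(a : ℝ)| = x at *
      generalize |(b : ℝ)| = y at *
      have key : ∀ u v K L : ℝ, 0 < u → 0 < v → 0 < K → 0 < L → v ≤ K * u →
          u ^ 2 + v ^ 2 ≤ ((1 + K + L) * u) ^ 2 := by
        intro u v K L hu hv hK hL h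
        have e1 : u ^ 2 + v ^ 2 ≤ (u + v) ^ 2 := by nlinarith [mul_pos hu hv]
        refine e1.trans (pow_le_pow_left₀ (by positivity) ?_ 2)
        nlinarith [mul_pos hL hu]
      rcases le_total x y with hxy | hxy
      · rw [min_eq_left hxy]
        exact key x y K₁ K₃ (by linarith) (by linarith) k1 k3 r1
      · rw [min_eq_right hxy]
        have := key y x K₃ K₁ (by linarith) (by linarith) k3 k1 r3
        rw [add_comm (x ^ 2), add_right_comm 1 K₁ K₃]
        exact this
    have hm0 : 0 ≤ min |(a : ℝ)| |(b : ℝ)| := by linarith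
    have hr : ((a : ℝ) ^ 2 + (b : ℝ) ^ 2) ^ (m₀ / 2) ≤
        (1 + K₁ + K₃) ^ m₀ * (min |(a : ℝ)| |(b : ℝ)|) ^ m₀ := by
      refine (Real.rpow_le_rpow (by positivity) hq (by positivity)).trans (le_of_eq ?_)
      rw [← Real.mul_rpow (by positivity) hm0, ← Real.rpow_natCast, ← Real.rpow_mul (by positivity)]
      congr 1
      push_cast
      ring
    have := hub a b ha hb
    have := mul_le_mul_of_nonneg_left hr hC₀.le
    nlinarith
end

section
/- Let δ₁, δ₃ be nonzero real numbers, m̃₀ ≥ 0 a real number and C₀ > 0, and assume that λ₁δ₁ + λ₃δ₃ ≠ 0 for all nonzero integers λ₁, λ₃ and that 1/|λ₁δ₁ + λ₃δ₃| ≤ C₀ min(|λ₁|^{m̃₀}, |λ₃|^{m̃₀}) for all nonzero integers λ₁, λ₃. Then there exists a constant C > 0 such that for all integers λ, μ with μ ≠ 0 and μ ≠ λ: |μ(λ−μ)/((λ−μ)δ₁ + μδ₃)| ≤ C min(|μ|, |λ−μ|)^{m̃₀+2}. -/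
theorem aux_kernel (d e m C₀ x y D : ℝ) (hd : d ≠ 0) (hm : 0 ≤ m) (hC : 0 < C₀) (hD : D ≠ 0)
    (hy : 1 ≤ |y|) (h : 1 / |D| ≤ C₀ * |y| ^ m) (hDe : D = x * d + y * e) :
    |y * x / D| ≤ (1 + C₀ * |e|) / |d| * |y| ^ (m + 2) := by
  have hd' : 0 < |d| := abs_pos.mpr hd
  have hD' : 0 < |D| := abs_pos.mpr hD
  have hy0 : 0 < |y| := by linarith
  have hP : 1 ≤ |y| ^ m := Real.one_le_rpow hy hm
  have e2 : |y| ^ (m + 2) = |y| ^ m * |y| ^ 2 := by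
    rw [Real.rpow_add hy0]; norm_num
  have hx : |x| * |d| ≤ |D| + |y| * |e| := by
    rw [← abs_mul, ← abs_mul]
    have : x * d = D - y * e := by rw [hDe]; ring
    rw [this]
    exact abs_sub _ _
  rw [e2, abs_div, abs_mul, div_mul_eq_mul_div, le_div_iff₀ hd']
  generalize |y| ^ m = P at *
  have he : 0 ≤ |e| := abs_nonneg e
  calc |y| * |x| / |D| * |d| = |y| * (|x| * |d|) / |D| := by ring
    _ ≤ |y| * (|D| + |y| * |e|) / |D| := by gcongr
    _ = |y| + |y| ^ 2 * |e| * (1 / |D|) := by field_simp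
    _ ≤ |y| + |y| ^ 2 * |e| * (C₀ * P) := by gcongr
    _ ≤ P * |y| ^ 2 + |y| ^ 2 * |e| * (C₀ * P) := by
        gcongr
        nlinarith [mul_le_mul hP hy zero_le_one (by linarith)]
    _ = (1 + C₀ * |e|) * (P * |y| ^ 2) := by ring

/-- Key kernel estimate from the proof of **Proposition 3.6**: the kernel
`F(λ,μ) = μ(λ−μ)/((λ−μ)δ₁ + μδ₃)` is bounded by `C min(|μ|, |λ−μ|)^{m̃₀+2}`. -/
theorem stmt3 (δ₁ δ₃ : ℝ) (hδ₁ : δ₁ ≠ 0) (hδ₃ : δ₃ ≠ 0)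
    (m₀ : ℝ) (hm₀ : 0 ≤ m₀) (C₀ : ℝ) (hC₀ : 0 < C₀)
    (hne : ∀ l₁ l₃ : ℤ, l₁ ≠ 0 → l₃ ≠ 0 → (l₁ : ℝ) * δ₁ + (l₃ : ℝ) * δ₃ ≠ 0)
    (hub : ∀ l₁ l₃ : ℤ, l₁ ≠ 0 → l₃ ≠ 0 →
      1 / |(l₁ : ℝ) * δ₁ + (l₃ : ℝ) * δ₃| ≤ C₀ * min (|(l₁ : ℝ)| ^ m₀) (|(l₃ : ℝ)| ^ m₀)) :
    ∃ C > 0, ∀ l μ : ℤ, μ ≠ 0 → μ ≠ l →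
      |(μ : ℝ) * ((l : ℝ) - (μ : ℝ)) / (((l : ℝ) - (μ : ℝ)) * δ₁ + (μ : ℝ) * δ₃)|
        ≤ C * (min |(μ : ℝ)| |(l : ℝ) - (μ : ℝ)|) ^ (m₀ + 2) := by
  have hd1 : 0 < |δ₁| := abs_pos.mpr hδ₁
  have hd3 : 0 < |δ₃| := abs_pos.mpr hδ₃
  refine ⟨(1 + C₀ * |δ₃|) / |δ₁| + (1 + C₀ * |δ₁|) / |δ₃|, by positivity, ?_⟩
  intro l μ hμ hl
  have ha : l - μ ≠ 0 := sub_ne_zero.mpr (Ne.symm hl)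
  have hD := hne (l - μ) μ ha hμ
  have hu := hub (l - μ) μ ha hμ
  have hy : (1 : ℝ) ≤ |(μ : ℝ)| := by exact_mod_cast Int.one_le_abs hμ
  have hx : (1 : ℝ) ≤ |((l - μ : ℤ) : ℝ)| := by exact_mod_cast Int.one_le_abs ha
  push_cast at hD hu hx
  have p1 : 0 ≤ (1 + C₀ * |δ₃|) / |δ₁| := by positivity
  have p2 : 0 ≤ (1 + C₀ * |δ₁|) / |δ₃| := by positivity
  rcases min_choice |(μ : ℝ)| |(l : ℝ) - (μ : ℝ)| with hmin | hmin <;> rw [hmin]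
  · refine (aux_kernel δ₁ δ₃ m₀ C₀ _ _ _ hδ₁ hm₀ hC₀ hD hy
      (hu.trans (mul_le_mul_of_nonneg_left (min_le_right _ _) hC₀.le)) rfl).trans ?_
    gcongr
    linarith
  · rw [mul_comm (μ : ℝ) ((l : ℝ) - μ)]
    refine (aux_kernel δ₃ δ₁ m₀ C₀ _ _ _ hδ₃ hm₀ hC₀ hD hx
      (hu.trans (mul_le_mul_of_nonneg_left (min_le_left _ _) hC₀.le)) (add_comm _ _)).trans ?_
    gcongr
    linarith
end

section
/- Let d ≥ 2 be an integer and d* a positive integer with 2d* > d. Then there exists a constant C > 0 (depending only on d and d*) such that for every s ∈ [0,1] and all measurable F, G : ℝ^{d−1} × ℤ → ℂ with ‖F‖_s < ∞ and ‖G‖_s < ∞, the convolution (F ⋆ G)(ξ,λ) := ∫_{ℝ^{d−1}} Σ_{μ∈ℤ} F(η,μ) G(ξ−η, λ−μ) dη satisfies ‖F ⋆ G‖_s ≤ C ‖F‖_s ‖G‖_s. -/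
open MeasureTheory
open scoped ENNReal

noncomputable section

lemma aux_cs {X : Type*} [MeasurableSpace X] (ν : Measure X) (a b : X → ℝ≥0∞)
    (ha : Measurable a) (hb : Measurable b) :
    (∫⁻ y, a y * b y ∂ν) ^ 2 ≤ (∫⁻ y, a y ^ 2 ∂ν) * ∫⁻ y, b y ^ 2 ∂ν := by
  have h := ENNReal.lintegral_mul_le_Lp_mul_Lq ν Real.HolderConjugate.two_two
    ha.aemeasurable hb.aemeasurable
  simp only [Pi.mul_apply, ENNReal.rpow_two] at h
  calc _ ≤ ((∫⁻ y, a y ^ 2 ∂ν) ^ (1 / 2 : ℝ) * (∫⁻ y, b y ^ 2 ∂ν) ^ (1 / 2 : ℝ)) ^ 2 := by gcongr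
    _ = _ := by
      rw [mul_pow, ← ENNReal.rpow_two, ← ENNReal.rpow_two, ← ENNReal.rpow_mul, ← ENNReal.rpow_mul]
      norm_num

lemma aux_conv {X : Type*} [AddCommGroup X] [MeasurableSpace X] [MeasurableAdd₂ X]
    [MeasurableSub₂ X] [MeasurableNeg X] (ν : Measure X) [SFinite ν] [ν.IsAddLeftInvariant]
    [ν.IsNegInvariant] (w J f g : X → ℝ≥0∞) (K : ℝ≥0∞)
    (hw : Measurable w) (hJ : Measurable J) (hf : Measurable f) (hg : Measurable g)
    (hw0 : ∀ x, w x ≠ 0) (hwt : ∀ x, w x ≠ ⊤)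
    (hK : ∀ x y, w x ^ 2 * ((w y)⁻¹ * (w (x - y))⁻¹) ^ 2 ≤ K * (J y + J (x - y))) :
    ∫⁻ x, w x ^ 2 * (∫⁻ y, f y * g (x - y) ∂ν) ^ 2 ∂ν ≤
      (K * (2 * ∫⁻ y, J y ∂ν)) * (∫⁻ y, w y ^ 2 * f y ^ 2 ∂ν) * ∫⁻ y, w y ^ 2 * g y ^ 2 ∂ν := by
  have key : ∀ x, w x ^ 2 * (∫⁻ y, f y * g (x - y) ∂ν) ^ 2 ≤
      (K * (2 * ∫⁻ y, J y ∂ν)) *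
        ∫⁻ y, (w y ^ 2 * f y ^ 2) * (w (x - y) ^ 2 * g (x - y) ^ 2) ∂ν := by
    intro x
    have e1 : ∫⁻ y, f y * g (x - y) ∂ν =
        ∫⁻ y, (w y * f y * (w (x - y) * g (x - y))) * ((w y)⁻¹ * (w (x - y))⁻¹) ∂ν := by
      congr 1; ext y
      have h1 := ENNReal.mul_inv_cancel (hw0 y) (hwt y)
      have h2 := ENNReal.mul_inv_cancel (hw0 (x - y)) (hwt (x - y))
      calc f y * g (x - y) = (w y * (w y)⁻¹) * (w (x - y) * (w (x - y))⁻¹) *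
            (f y * g (x - y)) := by rw [h1, h2]; simp
        _ = _ := by ring
    have h := aux_cs ν (fun y => w y * f y * (w (x - y) * g (x - y)))
      (fun y => (w y)⁻¹ * (w (x - y))⁻¹) (by fun_prop) (by fun_prop)
    have h3 : w x ^ 2 * ∫⁻ y, ((w y)⁻¹ * (w (x - y))⁻¹) ^ 2 ∂ν ≤ K * (2 * ∫⁻ y, J y ∂ν) := by
      rw [← lintegral_const_mul _ (by fun_prop)]
      calc _ ≤ ∫⁻ y, K * (J y + J (x - y)) ∂ν := lintegral_mono fun y => hK x y
        _ = _ := by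
          rw [lintegral_const_mul _ (by fun_prop), lintegral_add_left hJ,
            lintegral_sub_left_eq_self J x, two_mul]
    rw [e1]
    calc _ ≤ w x ^ 2 * ((∫⁻ y, (w y * f y * (w (x - y) * g (x - y))) ^ 2 ∂ν) *
          ∫⁻ y, ((w y)⁻¹ * (w (x - y))⁻¹) ^ 2 ∂ν) := by gcongr
      _ = (w x ^ 2 * ∫⁻ y, ((w y)⁻¹ * (w (x - y))⁻¹) ^ 2 ∂ν) *
          (∫⁻ y, (w y * f y * (w (x - y) * g (x - y))) ^ 2 ∂ν) := by ring
      _ ≤ _ := by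
        refine mul_le_mul' h3 (le_of_eq ?_)
        congr 1; ext y; ring
  calc _ ≤ ∫⁻ x, (K * (2 * ∫⁻ y, J y ∂ν)) *
        ∫⁻ y, (w y ^ 2 * f y ^ 2) * (w (x - y) ^ 2 * g (x - y) ^ 2) ∂ν ∂ν := lintegral_mono key
    _ = (K * (2 * ∫⁻ y, J y ∂ν)) * ∫⁻ x, 
        ∫⁻ y, (w y ^ 2 * f y ^ 2) * (w (x - y) ^ 2 * g (x - y) ^ 2) ∂ν ∂ν := by
      rw [lintegral_const_mul]
      apply Measurable.lintegral_prod_right'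
        (f := fun p : X × X => (w p.2 ^ 2 * f p.2 ^ 2) * (w (p.1 - p.2) ^ 2 * g (p.1 - p.2) ^ 2))
      fun_prop
    _ = (K * (2 * ∫⁻ y, J y ∂ν)) * ∫⁻ y, 
        ∫⁻ x, (w y ^ 2 * f y ^ 2) * (w (x - y) ^ 2 * g (x - y) ^ 2) ∂ν ∂ν := by
      rw [lintegral_lintegral_swap]
      apply Measurable.aemeasurable
      unfold Function.uncurry
      fun_prop
    _ = (K * (2 * ∫⁻ y, J y ∂ν)) * ∫⁻ y, 
        (w y ^ 2 * f y ^ 2) * ∫⁻ x, (w x ^ 2 * g x ^ 2) ∂ν ∂ν := by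
      congr 2; ext y
      rw [lintegral_const_mul _ (by fun_prop),
        lintegral_sub_right_eq_self (fun x => w x ^ 2 * g x ^ 2) y]
    _ = _ := by
      rw [lintegral_mul_const _ (by fun_prop)]; ring

lemma aux_tri {n : ℕ} (ξ η : EuclideanSpace ℝ (Fin n)) (l m : ℝ) :
    √(‖ξ‖ ^ 2 + l ^ 2) ≤ √(‖η‖ ^ 2 + m ^ 2) + √(‖ξ - η‖ ^ 2 + (l - m) ^ 2) := by
  have h := norm_add_le (WithLp.toLp 2 (η, m)) (WithLp.toLp 2 (ξ - η, l - m))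
  rw [← WithLp.toLp_add] at h
  simpa [WithLp.prod_norm_eq_of_L2] using h

lemma aux_sum : ∑' l : ℤ, ENNReal.ofReal ((1 + (l : ℝ) ^ 2) ^ (-(3 / 4) : ℝ)) ≠ ⊤ := by
  have hs : Summable fun l : ℤ => (1 + (l : ℝ) ^ 2) ^ (-(3 / 4) : ℝ) := by
    have h0 : Summable fun l : ℤ => |(l : ℝ)| ^ (-(3 / 2) : ℝ) :=
      Real.summable_abs_int_rpow (by norm_num)
    refine h0.of_norm_bounded_eventually ?_
    rw [Filter.eventually_cofinite]
    refine (Set.finite_singleton (0 : ℤ)).subset ?_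
    intro l hl
    by_contra hne
    apply hl
    have hl0 : (0 : ℝ) < |(l : ℝ)| := by
      rw [abs_pos]; exact_mod_cast hne
    rw [Real.norm_of_nonneg (by positivity)]
    have : |(l : ℝ)| ^ (-(3 / 2) : ℝ) = ((l : ℝ) ^ 2) ^ (-(3 / 4) : ℝ) := by
      rw [← sq_abs, ← Real.rpow_natCast, ← Real.rpow_mul hl0.le]; norm_num
    rw [this]
    apply Real.rpow_le_rpow_of_nonpos
    · rw [← sq_abs]; positivity
    · linarith
    · norm_num
  exact hs.tsum_ofReal_ne_top

lemma aux_int (d dstar : ℕ) (hd : 2 ≤ d) (hdstar : d < 2 * dstar) :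
    ∫⁻ ξ : EuclideanSpace ℝ (Fin (d - 1)), ∑' l : ℤ,
      ENNReal.ofReal (((1 + ‖ξ‖ ^ 2 + (l : ℝ) ^ 2) ^ dstar)⁻¹) ≠ ⊤ := by
  have hb : ((d : ℝ)) + 1 ≤ 2 * dstar := by exact_mod_cast hdstar
  have hd' : (2 : ℝ) ≤ d := by exact_mod_cast hd
  have hint : Integrable (fun ξ : EuclideanSpace ℝ (Fin (d - 1)) =>
      (1 + ‖ξ‖ ^ 2) ^ (-(2 * dstar - 3 / 2 : ℝ) / 2)) volume := by
    apply integrable_rpow_neg_one_add_norm_sq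
    rw [finrank_euclideanSpace_fin, Nat.cast_sub (by omega)]
    push_cast; linarith
  have hfin := hint.lintegral_lt_top
  have hle : ∀ (ξ : EuclideanSpace ℝ (Fin (d - 1))) (l : ℤ),
      ENNReal.ofReal (((1 + ‖ξ‖ ^ 2 + (l : ℝ) ^ 2) ^ dstar)⁻¹) ≤
      ENNReal.ofReal ((1 + ‖ξ‖ ^ 2) ^ (-(2 * dstar - 3 / 2 : ℝ) / 2)) *
        ENNReal.ofReal ((1 + (l : ℝ) ^ 2) ^ (-(3 / 4) : ℝ)) := by
    intro ξ l
    rw [← ENNReal.ofReal_mul (by positivity)]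
    apply ENNReal.ofReal_le_ofReal
    have hp : 0 < 1 + ‖ξ‖ ^ 2 + (l : ℝ) ^ 2 := by positivity
    have e : ((1 + ‖ξ‖ ^ 2 + (l : ℝ) ^ 2) ^ dstar)⁻¹ =
        (1 + ‖ξ‖ ^ 2 + (l : ℝ) ^ 2) ^ (-(2 * dstar - 3 / 2 : ℝ) / 2) *
        (1 + ‖ξ‖ ^ 2 + (l : ℝ) ^ 2) ^ (-(3 / 4) : ℝ) := by
      rw [← Real.rpow_add hp, ← Real.rpow_natCast, ← Real.rpow_neg hp.le]
      congr 1; ring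
    rw [e]
    have h1 : (1 + ‖ξ‖ ^ 2 + (l : ℝ) ^ 2) ^ (-(2 * dstar - 3 / 2 : ℝ) / 2) ≤
        (1 + ‖ξ‖ ^ 2) ^ (-(2 * dstar - 3 / 2 : ℝ) / 2) := by
      apply Real.rpow_le_rpow_of_nonpos
      · positivity
      · nlinarith [sq_nonneg (l : ℝ)]
      · linarith
    have h2 : (1 + ‖ξ‖ ^ 2 + (l : ℝ) ^ 2) ^ (-(3 / 4) : ℝ) ≤
        (1 + (l : ℝ) ^ 2) ^ (-(3 / 4) : ℝ) := by
      apply Real.rpow_le_rpow_of_nonpos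
      · positivity
      · nlinarith [sq_nonneg ‖ξ‖]
      · norm_num
    gcongr
  refine ne_top_of_le_ne_top ?_ (lintegral_mono fun ξ => ENNReal.tsum_le_tsum (hle ξ))
  simp_rw [ENNReal.tsum_mul_left]
  rw [lintegral_mul_const' _ _ aux_sum]
  exact ENNReal.mul_ne_top hfin.ne aux_sum

lemma aux_weight {n : ℕ} (k : ℕ) (s : ℝ) (hs : 0 ≤ s) (ξ η : EuclideanSpace ℝ (Fin n)) (l m : ℝ) :
    (Real.exp (s * √(‖ξ‖ ^ 2 + l ^ 2)) * √((1 + ‖ξ‖ ^ 2 + l ^ 2) ^ k)) ^ 2 *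
    ((Real.exp (s * √(‖η‖ ^ 2 + m ^ 2)) * √((1 + ‖η‖ ^ 2 + m ^ 2) ^ k))⁻¹ *
    (Real.exp (s * √(‖ξ - η‖ ^ 2 + (l - m) ^ 2)) *
      √((1 + ‖ξ - η‖ ^ 2 + (l - m) ^ 2) ^ k))⁻¹) ^ 2 ≤
    4 ^ k * (((1 + ‖η‖ ^ 2 + m ^ 2) ^ k)⁻¹ + ((1 + ‖ξ - η‖ ^ 2 + (l - m) ^ 2) ^ k)⁻¹) := by
  have ht := aux_tri ξ η l m
  set a := √(‖ξ‖ ^ 2 + l ^ 2) with ha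
  set b := √(‖η‖ ^ 2 + m ^ 2) with hb
  set c := √(‖ξ - η‖ ^ 2 + (l - m) ^ 2) with hc
  have ha2 : ‖ξ‖ ^ 2 + l ^ 2 = a ^ 2 := (Real.sq_sqrt (by positivity)).symm
  have hb2 : ‖η‖ ^ 2 + m ^ 2 = b ^ 2 := (Real.sq_sqrt (by positivity)).symm
  have hc2 : ‖ξ - η‖ ^ 2 + (l - m) ^ 2 = c ^ 2 := (Real.sq_sqrt (by positivity)).symm
  have ha0 : 0 ≤ a := Real.sqrt_nonneg _
  have hb0 : 0 ≤ b := Real.sqrt_nonneg _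
  have hc0 : 0 ≤ c := Real.sqrt_nonneg _
  simp only [add_assoc, ha2, hb2, hc2]
  clear_value a b c
  have hE : Real.exp (s * a) ≤ Real.exp (s * b) * Real.exp (s * c) := by
    rw [← Real.exp_add, ← mul_add]
    exact Real.exp_le_exp.2 (mul_le_mul_of_nonneg_left ht hs)
  have hP : (1 + a ^ 2) ^ k ≤ 4 ^ k * ((1 + b ^ 2) ^ k + (1 + c ^ 2) ^ k) := by
    have h1 : 1 + a ^ 2 ≤ 2 * ((1 + b ^ 2) + (1 + c ^ 2)) := by
      nlinarith [sq_nonneg (b - c)]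
    calc (1 + a ^ 2) ^ k ≤ (2 * ((1 + b ^ 2) + (1 + c ^ 2))) ^ k := by gcongr
      _ = 2 ^ k * ((1 + b ^ 2) + (1 + c ^ 2)) ^ k := mul_pow _ _ _
      _ ≤ 2 ^ k * (2 ^ (k - 1) * ((1 + b ^ 2) ^ k + (1 + c ^ 2) ^ k)) := by
        gcongr; exact add_pow_le (by positivity) (by positivity) k
      _ ≤ 2 ^ k * (2 ^ k * ((1 + b ^ 2) ^ k + (1 + c ^ 2) ^ k)) := by
        gcongr
        · norm_num
        · omega
      _ = _ := by rw [← mul_assoc, ← mul_pow]; norm_num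
  have hB : 0 < (1 + b ^ 2) ^ k := by positivity
  have hC : 0 < (1 + c ^ 2) ^ k := by positivity
  have hA : 0 < (1 + a ^ 2) ^ k := by positivity
  generalize (1 + b ^ 2) ^ k = B at *
  generalize (1 + c ^ 2) ^ k = D at *
  generalize (1 + a ^ 2) ^ k = A at *
  have pb := Real.exp_pos (s * b)
  have pc := Real.exp_pos (s * c)
  have pa := Real.exp_pos (s * a)
  generalize Real.exp (s * b) = eb at *
  generalize Real.exp (s * c) = ec at *
  generalize Real.exp (s * a) = ea at *
  simp only [mul_pow, inv_pow, mul_inv, Real.sq_sqrt hA.le, Real.sq_sqrt hB.le, Real.sq_sqrt hC.le]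
  have hE2 : ea ^ 2 * ((eb ^ 2)⁻¹ * (ec ^ 2)⁻¹) ≤ 1 := by
    rw [← mul_inv, ← mul_pow, ← div_eq_mul_inv, div_le_one (by positivity)]
    gcongr
  calc _ = (ea ^ 2 * ((eb ^ 2)⁻¹ * (ec ^ 2)⁻¹)) * (A * (B⁻¹ * D⁻¹)) := by ring
    _ ≤ 1 * ((4 ^ k * (B + D)) * (B⁻¹ * D⁻¹)) := by gcongr
    _ = _ := by field_simp; ring

lemma aux_neg (n : ℕ) : ((volume : Measure (EuclideanSpace ℝ (Fin n))).prod
    (Measure.count : Measure ℤ)).IsNegInvariant := by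
  constructor
  have h := Measure.map_prod_map (volume : Measure (EuclideanSpace ℝ (Fin n)))
    (Measure.count : Measure ℤ) (f := Neg.neg) (g := Neg.neg) measurable_neg measurable_neg
  rw [Measure.map_neg_eq_self, Measure.map_neg_eq_self] at h
  exact h.symm

/-- **Lemma 3.4** (Fourier side): the analytic space `Y_s` is a Banach algebra up to a
constant: the convolution of two Fourier data satisfies `‖F ⋆ G‖_s ≤ C ‖F‖_s ‖G‖_s`,
stated here with squared norms. -/
theorem stmt5 (d dstar : ℕ) (hd : 2 ≤ d) (hdstar : d < 2 * dstar) :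
    ∃ C > 0, ∀ s ∈ Set.Icc (0 : ℝ) 1,
      ∀ F G : EuclideanSpace ℝ (Fin (d - 1)) × ℤ → ℂ,
        Measurable F → Measurable G →
        YNormSq d dstar s F ≠ ⊤ → YNormSq d dstar s G ≠ ⊤ →
        YNormSq d dstar s (fun p => ∫ η, ∑' μ : ℤ, F (η, μ) * G (p.1 - η, p.2 - μ))
          ≤ ENNReal.ofReal (C ^ 2) * YNormSq d dstar s F * YNormSq d dstar s G := by
  have := aux_neg (d - 1)
  set I := ∫⁻ ξ : EuclideanSpace ℝ (Fin (d - 1)), ∑' l : ℤ,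
      ENNReal.ofReal (((1 + ‖ξ‖ ^ 2 + (l : ℝ) ^ 2) ^ dstar)⁻¹) with hI
  have hIt : I ≠ ⊤ := aux_int d dstar hd hdstar
  set M := ENNReal.ofReal (4 ^ dstar) * (2 * I) with hM
  have hMt : M ≠ ⊤ := ENNReal.mul_ne_top ENNReal.ofReal_ne_top (ENNReal.mul_ne_top (by simp) hIt)
  refine ⟨√(M.toReal + 1), by positivity, ?_⟩
  rintro s ⟨hs, -⟩ F G hF hG - -
  rw [Real.sq_sqrt (by positivity)]
  have hMle : M ≤ ENNReal.ofReal (M.toReal + 1) := by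
    rw [← ENNReal.ofReal_toReal hMt]
    exact ENNReal.ofReal_le_ofReal (by simp)
  set ν := (volume : Measure (EuclideanSpace ℝ (Fin (d - 1)))).prod (Measure.count : Measure ℤ)
    with hν
  let wr : EuclideanSpace ℝ (Fin (d - 1)) × ℤ → ℝ := fun p =>
    Real.exp (s * √(‖p.1‖ ^ 2 + (p.2 : ℝ) ^ 2)) * √((1 + ‖p.1‖ ^ 2 + (p.2 : ℝ) ^ 2) ^ dstar)
  let w : EuclideanSpace ℝ (Fin (d - 1)) × ℤ → ℝ≥0∞ := fun p => ENNReal.ofReal (wr p)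
  let J : EuclideanSpace ℝ (Fin (d - 1)) × ℤ → ℝ≥0∞ := fun p =>
    ENNReal.ofReal (((1 + ‖p.1‖ ^ 2 + (p.2 : ℝ) ^ 2) ^ dstar)⁻¹)
  have hcast : Measurable fun p : EuclideanSpace ℝ (Fin (d - 1)) × ℤ => (p.2 : ℝ) :=
    (measurable_of_countable _).comp measurable_snd
  have hwr : ∀ p, 0 < wr p := fun p => by
    have : 0 < (1 + ‖p.1‖ ^ 2 + (p.2 : ℝ) ^ 2) ^ dstar := by positivity
    have := Real.sqrt_pos.2 this
    positivity
  have hw : Measurable w := by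
    apply Measurable.ennreal_ofReal
    fun_prop
  have hJ : Measurable J := by
    apply Measurable.ennreal_ofReal
    fun_prop
  have hint : ∀ h : EuclideanSpace ℝ (Fin (d - 1)) × ℤ → ℝ≥0∞, Measurable h →
      ∫⁻ p, h p ∂ν = ∫⁻ ξ, ∑' l : ℤ, h (ξ, l) := by
    intro h hh
    rw [hν, lintegral_prod _ hh.aemeasurable]
    simp_rw [lintegral_count]
  have hpt : ∀ (z : ℂ) (ξ : EuclideanSpace ℝ (Fin (d - 1))) (l : ℤ),
      ENNReal.ofReal (Real.exp (2 * s * Real.sqrt (‖ξ‖ ^ 2 + (l : ℝ) ^ 2)) *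
      (1 + ‖ξ‖ ^ 2 + (l : ℝ) ^ 2) ^ dstar * ‖z‖ ^ 2) = w (ξ, l) ^ 2 * ‖z‖ₑ ^ 2 := by
    intro z ξ l
    rw [← ofReal_norm_eq_enorm, ← ENNReal.ofReal_pow (hwr _).le,
      ← ENNReal.ofReal_pow (norm_nonneg _), ← ENNReal.ofReal_mul (by positivity)]
    congr 2
    simp only [wr]
    rw [mul_pow, Real.sq_sqrt (by positivity), ← Real.exp_nat_mul]
    congr 2; push_cast; ring
  have hY : ∀ H : EuclideanSpace ℝ (Fin (d - 1)) × ℤ → ℂ, Measurable H →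
      YNormSq d dstar s H = ∫⁻ p, w p ^ 2 * ‖H p‖ₑ ^ 2 ∂ν := by
    intro H hH
    rw [hint _ (by fun_prop)]
    simp only [YNormSq, hpt]
  have hmain := aux_conv ν w J (fun p => ‖F p‖ₑ) (fun p => ‖G p‖ₑ) (ENNReal.ofReal (4 ^ dstar))
    hw hJ hF.enorm hG.enorm (fun x => by simpa [w] using hwr x) (fun x => by simp [w]) (by
      rintro ⟨ξ, l⟩ ⟨η, m⟩
      simp only [w, J]
      rw [← ENNReal.ofReal_inv_of_pos (hwr _), ← ENNReal.ofReal_inv_of_pos (hwr _),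
        ← ENNReal.ofReal_mul (inv_nonneg.2 (hwr _).le),
        ← ENNReal.ofReal_pow (hwr _).le, ← ENNReal.ofReal_pow
          (mul_nonneg (inv_nonneg.2 (hwr _).le) (inv_nonneg.2 (hwr _).le)),
        ← ENNReal.ofReal_mul (by positivity), ← ENNReal.ofReal_add (by positivity) (by positivity),
        ← ENNReal.ofReal_mul (by positivity)]
      apply ENNReal.ofReal_le_ofReal
      have := aux_weight dstar s hs ξ η l m
      simpa [wr] using this)
  rw [hint J hJ, ← hY F hF, ← hY G hG] at hmain
  refine le_trans ?_ (hmain.trans (by gcongr))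
  rw [hint _ ?_]
  · simp only [YNormSq, hpt]
    refine lintegral_mono fun ξ => ENNReal.tsum_le_tsum fun l => ?_
    gcongr
    rw [hint _ (by fun_prop)]
    refine (enorm_integral_le_lintegral_enorm _).trans (lintegral_mono fun η => ?_)
    refine enorm_tsum_le_tsum_enorm.trans (le_of_eq ?_)
    simp [enorm_mul]
  · refine (hw.pow_const 2).mul (Measurable.pow_const ?_ 2)
    apply Measurable.lintegral_prod_right'
      (f := fun p : (EuclideanSpace ℝ (Fin (d - 1)) × ℤ) × (EuclideanSpace ℝ (Fin (d - 1)) × ℤ) =>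
        ‖F p.2‖ₑ * ‖G (p.1 - p.2)‖ₑ)
    fun_prop

end
end

section
/- Let d be a positive integer. There exists a constant C > 0, depending only on d, such that for all reals 0 < r' < r ≤ 1, every M ≥ 0, every function a : ℕ^{d+1} → ℝ satisfying 0 ≤ a(α) ≤ M α! / (r^{|α|} (|α|^{2d+1} + 1)) for all multi-indices α ∈ ℕ^{d+1}, and every unit multi-index e ∈ ℕ^{d+1} (|e| = 1): a(α + e) ≤ (C M / (r − r')) · α! / ((r')^{|α|} (|α|^{2d+1} + 1)) for all α ∈ ℕ^{d+1}. -/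
open Finset

lemma aux_pow (r' r : ℝ) (h0 : 0 < r') (h : r' < r) (n : ℕ) :
    ((n : ℝ) + 1) * r' ^ n * (r - r') + r' ^ (n + 1) ≤ r ^ (n + 1) := by
  induction n with
  | zero => simp
  | succ n ih =>
    have h1 := mul_le_mul_of_nonneg_left ih (h0.trans h).le
    have h2 : 0 ≤ ((n : ℝ) + 1) * r' ^ n * (r - r') * (r - r') := by
      have : 0 ≤ r - r' := by linarith
      positivity
    have e1 : r ^ (n + 1 + 1) = r * r ^ (n + 1) := by ring
    rw [e1]
    refine le_trans ?_ h1
    push_cast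
    linear_combination h2

lemma aux_fact {d : ℕ} (e α : Fin (d + 1) → ℕ) (he : (∑ i, e i) = 1) :
    (∏ i, (Nat.factorial ((α + e) i) : ℝ)) ≤
      (((∑ i, α i : ℕ) : ℝ) + 1) * ∏ i, (Nat.factorial (α i) : ℝ) := by
  obtain ⟨i, hi⟩ : ∃ i, e i ≠ 0 := by
    by_contra! hc
    simp [hc] at he
  have hs := Finset.add_sum_erase univ e (mem_univ i)
  have hz : ∑ j ∈ univ.erase i, e j = 0 := by omega
  have hi1 : e i = 1 := by omega
  rw [Finset.sum_eq_zero_iff] at hz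
  rw [← Finset.mul_prod_erase univ _ (mem_univ i),
    ← Finset.mul_prod_erase univ (fun i => (Nat.factorial (α i) : ℝ)) (mem_univ i)]
  have hp : ∏ j ∈ univ.erase i, (Nat.factorial ((α + e) j) : ℝ) =
      ∏ j ∈ univ.erase i, (Nat.factorial (α j) : ℝ) := by
    refine Finset.prod_congr rfl fun j hj => ?_
    simp [hz j hj]
  rw [hp, Pi.add_apply, hi1, Nat.factorial_succ]
  have hle : α i ≤ ∑ j, α j := Finset.single_le_sum (fun _ _ => Nat.zero_le _) (mem_univ i)
  have hle' : (α i : ℝ) ≤ ((∑ j, α j : ℕ) : ℝ) := by exact_mod_cast hle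
  rw [← mul_assoc]
  rw [Nat.cast_mul, Nat.cast_add_one]
  gcongr

/-- **Lemma 3.17** (coefficient level): if the derivative coefficients of an analytic
function satisfy `0 ≤ a(α) ≤ M α!/(r^{|α|}(|α|^{2d+1}+1))`, then for any unit multi-index
`e`, `a(α+e) ≤ (CM/(r−r')) α!/((r')^{|α|}(|α|^{2d+1}+1))`: first-order derivatives map
`X_r` into `X_{r'}` with norm at most `C/(r−r')`. -/
theorem stmt8 (d : ℕ) (hd : 0 < d) :
    ∃ C > 0, ∀ r' r : ℝ, 0 < r' → r' < r → r ≤ 1 →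
      ∀ M : ℝ, 0 ≤ M → ∀ a : (Fin (d + 1) → ℕ) → ℝ,
        (∀ α : Fin (d + 1) → ℕ, 0 ≤ a α ∧
          a α ≤ M * (∏ i, (Nat.factorial (α i) : ℝ)) /
            (r ^ (∑ i, α i) * (((∑ i, α i : ℕ) : ℝ) ^ (2 * d + 1) + 1))) →
        ∀ e : Fin (d + 1) → ℕ, (∑ i, e i) = 1 →
        ∀ α : Fin (d + 1) → ℕ,
          a (α + e) ≤ (C * M / (r - r')) * (∏ i, (Nat.factorial (α i) : ℝ)) /
            (r' ^ (∑ i, α i) * (((∑ i, α i : ℕ) : ℝ) ^ (2 * d + 1) + 1)) := by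
  refine ⟨1, one_pos, ?_⟩
  intro r' r h0 h hr M hM a ha e he α
  refine (ha (α + e)).2.trans ?_
  have hn : ∑ i, (α + e) i = (∑ i, α i) + 1 := by
    simp [Finset.sum_add_distrib, he]
  rw [hn]
  have hf := aux_fact e α he
  have hp := aux_pow r' r h0 h (∑ i, α i)
  generalize (∑ i, α i) = n at *
  have hP : 0 < ∏ i, (Nat.factorial (α i) : ℝ) :=
    Finset.prod_pos fun i _ => by exact_mod_cast Nat.factorial_pos _
  generalize (∏ i, (Nat.factorial (α i) : ℝ)) = P at *
  generalize (∏ i, (Nat.factorial ((α + e) i) : ℝ)) = Q at *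
  have hr0 : 0 < r := h0.trans h
  have hd : 0 < r - r' := by linarith
  have key : ((n : ℝ) + 1) * r' ^ n * (r - r') ≤ r ^ (n + 1) := by
    have : 0 < r' ^ (n + 1) := by positivity
    linarith
  calc M * Q / (r ^ (n + 1) * (((n + 1 : ℕ) : ℝ) ^ (2 * d + 1) + 1))
      ≤ M * (((n : ℝ) + 1) * P) / (r ^ (n + 1) * ((n : ℝ) ^ (2 * d + 1) + 1)) := by
        gcongr
        simp
    _ ≤ M * (((n : ℝ) + 1) * P) /
          ((((n : ℝ) + 1) * r' ^ n * (r - r')) * ((n : ℝ) ^ (2 * d + 1) + 1)) := by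
        gcongr
    _ = _ := by
        field_simp
end

section
/- Let d be a positive integer. There exists a constant C > 0, depending only on d, such that for every real 0 < r ≤ 1, all M_a, M_b ≥ 0, and all functions a, b : ℕ^{d+1} → ℝ satisfying 0 ≤ a(α) ≤ M_a α! / (r^{|α|} (|α|^{2d+1} + 1)) and 0 ≤ b(α) ≤ M_b α! / (r^{|α|} (|α|^{2d+1} + 1)) for all multi-indices α ∈ ℕ^{d+1}, one has for every α ∈ ℕ^{d+1}: Σ_{β ≤ α} binom(α, β) a(β) b(α − β) ≤ C M_a M_b α! / (r^{|α|} (|α|^{2d+1} + 1)), where binom(α,β) := ∏_i binom(α_i, β_i) and β ≤ α means β_i ≤ α_i for every i. In particular, the sum Σ_{β ≤ α} (|α|^{2d+1} + 1) / ((|β|^{2d+1} + 1)(|α − β|^{2d+1} + 1)) is bounded uniformly with respect to α ∈ ℕ^{d+1}. -/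
open Finset

lemma aux_two (p m n : ℕ) :
    (((m + n : ℕ) : ℝ)) ^ p + 1 ≤ 2 ^ p * (((m : ℝ) ^ p + 1) + ((n : ℝ) ^ p + 1)) := by
  have h1 : (((m + n : ℕ) : ℝ)) ^ p ≤ 2 ^ p * ((m : ℝ) ^ p + (n : ℝ) ^ p) := by
    have hm : (0 : ℝ) ≤ (m : ℝ) ^ p := by positivity
    have hn : (0 : ℝ) ≤ (n : ℝ) ^ p := by positivity
    rcases le_total m n with h | h
    · have h' : (m : ℝ) ≤ n := by exact_mod_cast h
      calc (((m + n : ℕ) : ℝ)) ^ p ≤ (2 * (n : ℝ)) ^ p := by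
            apply pow_le_pow_left₀ (by positivity)
            push_cast; linarith
        _ = 2 ^ p * (n : ℝ) ^ p := mul_pow _ _ _
        _ ≤ _ := by gcongr; linarith
    · have h' : (n : ℝ) ≤ m := by exact_mod_cast h
      calc (((m + n : ℕ) : ℝ)) ^ p ≤ (2 * (m : ℝ)) ^ p := by
            apply pow_le_pow_left₀ (by positivity)
            push_cast; linarith
        _ = 2 ^ p * (m : ℝ) ^ p := mul_pow _ _ _
        _ ≤ _ := by gcongr; linarith
  have h2 : (1 : ℝ) ≤ 2 ^ p := one_le_pow₀ (by norm_num)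
  nlinarith

lemma aux_prod (d : ℕ) (β : Fin (d + 1) → ℕ) :
    1 / (((∑ i, β i : ℕ) : ℝ) ^ (2 * d + 1) + 1) ≤
      (2 ^ (2 * d + 1) * 3) * ∏ i, (((β i + 1 : ℕ) : ℝ) ^ (((2 * d + 1 : ℕ) : ℝ) / ((d + 1 : ℕ) : ℝ)))⁻¹ := by
  set s : ℝ := ((2 * d + 1 : ℕ) : ℝ) / ((d + 1 : ℕ) : ℝ) with hs
  have hs0 : 0 ≤ s := by positivity
  set N : ℕ := ∑ i, β i with hN
  have h1 : ∏ i, (((β i + 1 : ℕ) : ℝ) ^ s) ≤ ((N + 1 : ℕ) : ℝ) ^ (2 * d + 1) := by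
    calc ∏ i, (((β i + 1 : ℕ) : ℝ) ^ s) ≤ ∏ i : Fin (d + 1), (((N + 1 : ℕ) : ℝ) ^ s) := by
          apply Finset.prod_le_prod
          · intros; positivity
          · intro i _
            apply Real.rpow_le_rpow (by positivity) _ hs0
            have : β i ≤ N := Finset.single_le_sum (f := β) (fun _ _ => Nat.zero_le _) (Finset.mem_univ i)
            exact_mod_cast Nat.succ_le_succ this
      _ = ((N + 1 : ℕ) : ℝ) ^ (2 * d + 1) := by
          rw [Finset.prod_const, Finset.card_univ, Fintype.card_fin, ← Real.rpow_natCast,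
            ← Real.rpow_mul (by positivity), hs, div_mul_cancel₀ _ (by positivity),
            Real.rpow_natCast]
  have h2 := aux_two (2 * d + 1) N 1
  have h3 : (0 : ℝ) ≤ (N : ℝ) ^ (2 * d + 1) := by positivity
  have h5 : (0 : ℝ) < 2 ^ (2 * d + 1) := by positivity
  have h4 : ((N + 1 : ℕ) : ℝ) ^ (2 * d + 1) ≤ (2 ^ (2 * d + 1) * 3) * ((N : ℝ) ^ (2 * d + 1) + 1) := by
    simp only [Nat.cast_one, one_pow] at h2
    nlinarith
  have hP : 0 < ∏ i, (((β i + 1 : ℕ) : ℝ) ^ s) := Finset.prod_pos fun i _ => by positivity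
  rw [Finset.prod_inv_distrib, ← div_eq_mul_inv, div_le_div_iff₀ (by positivity) hP]
  linarith

lemma aux_sum_s9 (d : ℕ) (hd : 0 < d) : ∃ S : ℝ, 0 < S ∧ ∀ α : Fin (d + 1) → ℕ,
    ∑ β ∈ Finset.Iic α, 1 / (((∑ i, β i : ℕ) : ℝ) ^ (2 * d + 1) + 1) ≤ S := by
  set s : ℝ := ((2 * d + 1 : ℕ) : ℝ) / ((d + 1 : ℕ) : ℝ) with hs
  have hs1 : 1 < s := by
    rw [hs, one_lt_div (by positivity)]
    exact_mod_cast (by omega : d + 1 < 2 * d + 1)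
  have hsum : Summable fun k : ℕ => (((k + 1 : ℕ) : ℝ) ^ s)⁻¹ :=
    (summable_nat_add_iff 1).2 (Real.summable_nat_rpow_inv.2 hs1)
  set K := ∑' k : ℕ, (((k + 1 : ℕ) : ℝ) ^ s)⁻¹ with hK
  have hK0 : 0 ≤ K := tsum_nonneg fun _ => by positivity
  refine ⟨(2 ^ (2 * d + 1) * 3) * K ^ (d + 1) + 1, by positivity, fun α => ?_⟩
  have hI : Finset.Iic α = Fintype.piFinset fun i => Finset.Iic (α i) := by
    ext β; simp [Pi.le_def]
  calc _ ≤ ∑ β ∈ Finset.Iic α, (2 ^ (2 * d + 1) * 3) * ∏ i, (((β i + 1 : ℕ) : ℝ) ^ s)⁻¹ :=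
        Finset.sum_le_sum fun β _ => aux_prod d β
    _ = (2 ^ (2 * d + 1) * 3) * ∏ i, ∑ k ∈ Finset.Iic (α i), (((k + 1 : ℕ) : ℝ) ^ s)⁻¹ := by
        rw [← Finset.mul_sum, hI, Finset.prod_univ_sum]
    _ ≤ (2 ^ (2 * d + 1) * 3) * ∏ i : Fin (d + 1), K := by
        gcongr with i _
        exact hsum.sum_le_tsum _ (fun _ _ => by positivity)
    _ ≤ _ := by simp

lemma aux_main (d : ℕ) (hd : 0 < d) : ∃ C : ℝ, 0 < C ∧ ∀ α : Fin (d + 1) → ℕ,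
          (∑ β ∈ Finset.Iic α,
            ((((∑ i, α i : ℕ) : ℝ) ^ (2 * d + 1) + 1) /
              (((((∑ i, β i : ℕ) : ℝ) ^ (2 * d + 1) + 1)) *
                ((((∑ i, (α - β) i : ℕ) : ℝ) ^ (2 * d + 1) + 1))))) ≤ C := by
  obtain ⟨S, hS, h⟩ := aux_sum_s9 d hd
  refine ⟨2 ^ (2 * d + 1) * (S + S), by positivity, fun α => ?_⟩
  have hrefl : ∑ β ∈ Finset.Iic α, 1 / (((∑ i, (α - β) i : ℕ) : ℝ) ^ (2 * d + 1) + 1) =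
      ∑ β ∈ Finset.Iic α, 1 / (((∑ i, β i : ℕ) : ℝ) ^ (2 * d + 1) + 1) := by
    refine Finset.sum_nbij' (fun β => α - β) (fun β => α - β) ?_ ?_ ?_ ?_ ?_
    · intro β _; simp
    · intro β _; simp
    · intro β hβ; exact tsub_tsub_cancel_of_le (Finset.mem_Iic.1 hβ)
    · intro β hβ; exact tsub_tsub_cancel_of_le (Finset.mem_Iic.1 hβ)
    · intro β _; rfl
  calc _ ≤ ∑ β ∈ Finset.Iic α, 2 ^ (2 * d + 1) * (1 / (((∑ i, (α - β) i : ℕ) : ℝ) ^ (2 * d + 1) + 1) + 1 / (((∑ i, β i : ℕ) : ℝ) ^ (2 * d + 1) + 1)) := by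
        apply Finset.sum_le_sum
        intro β hβ
        have hle := Finset.mem_Iic.1 hβ
        have hadd : ∑ i, α i = ∑ i, β i + ∑ i, (α - β) i := by
          rw [← Finset.sum_add_distrib]
          exact Finset.sum_congr rfl fun i _ => (add_tsub_cancel_of_le (hle i)).symm
        have := aux_two (2 * d + 1) (∑ i, β i) (∑ i, (α - β) i)
        rw [← hadd] at this
        rw [div_le_iff₀ (by positivity)]
        refine this.trans (le_of_eq ?_)
        have h1 : (((∑ i, β i : ℕ) : ℝ) ^ (2 * d + 1) + 1) ≠ 0 := by positivity
        have h2 : (((∑ i, (α - β) i : ℕ) : ℝ) ^ (2 * d + 1) + 1) ≠ 0 := by positivity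
        field_simp
    _ ≤ _ := by
        rw [← Finset.mul_sum, Finset.sum_add_distrib, hrefl]
        gcongr <;> exact h α

/-- **Lemma 3.18** (coefficient / Leibniz level): if the derivative coefficients of two
analytic functions satisfy `0 ≤ a(α) ≤ M_a α!/(r^{|α|}(|α|^{2d+1}+1))` and likewise for
`b`, then the Leibniz sums `Σ_{β≤α} binom(α,β) a(β) b(α−β)` satisfy the same kind of
bound with constant `C M_a M_b`; in particular the sum
`Σ_{β≤α} (|α|^{2d+1}+1)/((|β|^{2d+1}+1)(|α−β|^{2d+1}+1))` is bounded uniformly in `α`. -/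
theorem stmt9 (d : ℕ) (hd : 0 < d) :
    ∃ C > 0,
      (∀ r : ℝ, 0 < r → r ≤ 1 → ∀ Ma Mb : ℝ, 0 ≤ Ma → 0 ≤ Mb →
        ∀ a b : (Fin (d + 1) → ℕ) → ℝ,
          (∀ α : Fin (d + 1) → ℕ, 0 ≤ a α ∧
            a α ≤ Ma * (∏ i, (Nat.factorial (α i) : ℝ)) /
              (r ^ (∑ i, α i) * (((∑ i, α i : ℕ) : ℝ) ^ (2 * d + 1) + 1))) →
          (∀ α : Fin (d + 1) → ℕ, 0 ≤ b α ∧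
            b α ≤ Mb * (∏ i, (Nat.factorial (α i) : ℝ)) /
              (r ^ (∑ i, α i) * (((∑ i, α i : ℕ) : ℝ) ^ (2 * d + 1) + 1))) →
          ∀ α : Fin (d + 1) → ℕ,
            (∑ β ∈ Finset.Iic α,
              ((∏ i, Nat.choose (α i) (β i) : ℕ) : ℝ) * a β * b (α - β))
              ≤ C * Ma * Mb * (∏ i, (Nat.factorial (α i) : ℝ)) /
                (r ^ (∑ i, α i) * (((∑ i, α i : ℕ) : ℝ) ^ (2 * d + 1) + 1)))
      ∧ (∀ α : Fin (d + 1) → ℕ,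
          (∑ β ∈ Finset.Iic α,
            ((((∑ i, α i : ℕ) : ℝ) ^ (2 * d + 1) + 1) /
              (((((∑ i, β i : ℕ) : ℝ) ^ (2 * d + 1) + 1)) *
                ((((∑ i, (α - β) i : ℕ) : ℝ) ^ (2 * d + 1) + 1))))) ≤ C) := by
  obtain ⟨C, hC, h⟩ := aux_main d hd
  refine ⟨C, hC, ?_, h⟩
  intro r hr _ Ma Mb hMa hMb a b ha hb α
  set F : ℝ := Ma * Mb * (∏ i, (Nat.factorial (α i) : ℝ)) /
                (r ^ (∑ i, α i) * (((∑ i, α i : ℕ) : ℝ) ^ (2 * d + 1) + 1)) with hF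
  have hF0 : 0 ≤ F := by positivity
  calc _ ≤ ∑ β ∈ Finset.Iic α, F * ((((∑ i, α i : ℕ) : ℝ) ^ (2 * d + 1) + 1) /
              (((((∑ i, β i : ℕ) : ℝ) ^ (2 * d + 1) + 1)) *
                ((((∑ i, (α - β) i : ℕ) : ℝ) ^ (2 * d + 1) + 1)))) := by
        apply Finset.sum_le_sum
        intro β hβ
        have hle := Finset.mem_Iic.1 hβ
        have hadd : ∑ i, α i = ∑ i, β i + ∑ i, (α - β) i := by
          rw [← Finset.sum_add_distrib]
          exact Finset.sum_congr rfl fun i _ => (add_tsub_cancel_of_le (hle i)).symm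
        have hfac : (∏ i, (Nat.factorial (α i) : ℝ)) = ((∏ i, Nat.choose (α i) (β i) : ℕ) : ℝ) *
            (∏ i, (Nat.factorial (β i) : ℝ)) * (∏ i, (Nat.factorial ((α - β) i) : ℝ)) := by
          rw [Nat.cast_prod, ← Finset.prod_mul_distrib, ← Finset.prod_mul_distrib]
          refine Finset.prod_congr rfl fun i _ => ?_
          rw [← Nat.choose_mul_factorial_mul_factorial (hle i)]
          push_cast
          rfl
        have hA := ha β
        have hB := hb (α - β)
        calc _ ≤ ((∏ i, Nat.choose (α i) (β i) : ℕ) : ℝ) *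
              (Ma * (∏ i, (Nat.factorial (β i) : ℝ)) /
              (r ^ (∑ i, β i) * (((∑ i, β i : ℕ) : ℝ) ^ (2 * d + 1) + 1))) *
              (Mb * (∏ i, (Nat.factorial ((α - β) i) : ℝ)) /
              (r ^ (∑ i, (α - β) i) * (((∑ i, (α - β) i : ℕ) : ℝ) ^ (2 * d + 1) + 1))) := by
              apply mul_le_mul _ hB.2 hB.1 (by positivity)
              exact mul_le_mul_of_nonneg_left hA.2 (Nat.cast_nonneg _)
          _ = _ := by
              have hr' : r ^ (∑ i, α i) = r ^ (∑ i, β i) * r ^ (∑ i, (α - β) i) := by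
                rw [hadd, pow_add]
              rw [hF, hfac, hr']
              have h0 : (((∑ i, α i : ℕ) : ℝ) ^ (2 * d + 1) + 1) ≠ 0 := by positivity
              have h1 : (((∑ i, β i : ℕ) : ℝ) ^ (2 * d + 1) + 1) ≠ 0 := by positivity
              have h2 : (((∑ i, (α - β) i : ℕ) : ℝ) ^ (2 * d + 1) + 1) ≠ 0 := by positivity
              have h3 : r ^ (∑ i, β i) ≠ 0 := by positivity
              have h4 : r ^ (∑ i, (α - β) i) ≠ 0 := by positivity
              generalize (((∑ i, α i : ℕ) : ℝ) ^ (2 * d + 1) + 1) = x0 at *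
              generalize (((∑ i, β i : ℕ) : ℝ) ^ (2 * d + 1) + 1) = x1 at *
              generalize (((∑ i, (α - β) i : ℕ) : ℝ) ^ (2 * d + 1) + 1) = x2 at *
              generalize r ^ (∑ i, β i) = x3 at *
              generalize r ^ (∑ i, (α - β) i) = x4 at *
              field_simp
    _ ≤ F * C := by
        rw [← Finset.mul_sum]
        exact mul_le_mul_of_nonneg_left (h α) hF0
    _ = _ := by rw [hF]; ring
end

section
/- Let d ≥ 2 be an integer and d* a positive integer with 2d* > d − 1. Then there exists a constant C > 0 such that for all measurable u, v : ℝ^{d−1} × ℤ → ℂ with ∫_{ℝ^{d−1}} Σ_{λ∈ℤ} ⟨(ξ,λ)⟩^{2d*} |u(ξ,λ)|² dξ < ∞ and the same for v, the function w(ξ,λ) := ∫_{ℝ^{d−1}} u(η,λ) v(ξ−η,λ) dη (convolution in the continuous variable only, with the same discrete index λ) satisfies ∫_{ℝ^{d−1}} Σ_{λ∈ℤ} ⟨(ξ,λ)⟩^{2d*} |w(ξ,λ)|² dξ ≤ C² (∫Σ ⟨(ξ,λ)⟩^{2d*}|u|² dξ)(∫Σ ⟨(ξ,λ)⟩^{2d*}|v|²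 dξ). -/
open MeasureTheory
open scoped ENNReal

noncomputable section

/-- Squared `H^{d*}`-type norm of a Fourier datum on `ℝ^{d−1} × ℤ`:
`∫ Σ ⟨(ξ,λ)⟩^{2d*} |F(ξ,λ)|² dξ`. -/
def SobNormSq (d dstar : ℕ) (F : EuclideanSpace ℝ (Fin (d - 1)) × ℤ → ℂ) : ℝ≥0∞ :=
  ∫⁻ ξ : EuclideanSpace ℝ (Fin (d - 1)), ∑' l : ℤ,
    ENNReal.ofReal ((1 + ‖ξ‖ ^ 2 + (l : ℝ) ^ 2) ^ dstar * ‖F (ξ, l)‖ ^ 2)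

/-- one-mode weight -/
def Wt (s : ℕ) {E : Type*} [NormedAddCommGroup E] (l : ℤ) (x : E) : ℝ :=
  (1 + ‖x‖ ^ 2 + (l : ℝ) ^ 2) ^ s

lemma Wt_pos (s : ℕ) {E : Type*} [NormedAddCommGroup E] (l : ℤ) (x : E) : 0 < Wt s l x := by
  unfold Wt; positivity

lemma Wt_le (s : ℕ) {E : Type*} [NormedAddCommGroup E] (l : ℤ) (x y : E) :
    Wt s l x ≤ 4 ^ s * (Wt s l y + Wt s l (x - y)) := by
  unfold Wt
  have h0 : ‖x‖ ≤ ‖y‖ + ‖x - y‖ := by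
    have := norm_add_le y (x - y); simpa using this
  set a := 1 + ‖y‖ ^ 2 + (l : ℝ) ^ 2 with ha
  set b := 1 + ‖x - y‖ ^ 2 + (l : ℝ) ^ 2 with hb
  have ha0 : 0 ≤ a := by positivity
  have hb0 : 0 ≤ b := by positivity
  have h1 : 1 + ‖x‖ ^ 2 + (l : ℝ) ^ 2 ≤ 2 * (a + b) := by
    nlinarith [sq_nonneg (‖y‖ - ‖x - y‖), norm_nonneg x, norm_nonneg y, norm_nonneg (x - y),
      sq_nonneg (l : ℝ), pow_le_pow_left₀ (norm_nonneg x) h0 2]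
  have h2 : 1 + ‖x‖ ^ 2 + (l : ℝ) ^ 2 ≤ 4 * max a b := by
    have := le_max_left a b
    have := le_max_right a b
    linarith
  calc (1 + ‖x‖ ^ 2 + (l : ℝ) ^ 2) ^ s ≤ (4 * max a b) ^ s :=
        pow_le_pow_left₀ (by positivity) h2 s
    _ = 4 ^ s * (max a b) ^ s := mul_pow _ _ _
    _ ≤ 4 ^ s * (a ^ s + b ^ s) := by
        gcongr
        have := pow_nonneg ha0 s
        have := pow_nonneg hb0 s
        rcases max_choice a b with h | h <;> rw [h] <;> linarith

lemma Wt_key (s : ℕ) {E : Type*} [NormedAddCommGroup E] (l : ℤ) (x y : E) :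
    Wt s l x ≤ ((Wt s l y)⁻¹ + (Wt s l (x - y))⁻¹) *
      (4 ^ s * (Wt s l y * Wt s l (x - y))) := by
  have h1 := Wt_pos s l y
  have h2 := Wt_pos s l (x - y)
  refine (Wt_le s l x y).trans (le_of_eq ?_)
  field_simp
  ring

lemma Wt_meas (s : ℕ) {n : ℕ} (l : ℤ) :
    Measurable (Wt s l : EuclideanSpace ℝ (Fin n) → ℝ) := by
  unfold Wt; fun_prop

lemma A_fin (s n : ℕ) (h : n < 2 * s) :
    ∫⁻ x : EuclideanSpace ℝ (Fin n), ENNReal.ofReal ((Wt s 0 x)⁻¹) ≠ ⊤ := by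
  have hi : Integrable (fun x : EuclideanSpace ℝ (Fin n) => (Wt s 0 x)⁻¹) := by
    have := integrable_rpow_neg_one_add_norm_sq (E := EuclideanSpace ℝ (Fin n))
      (μ := volume) (r := 2 * s) (by simpa using (by exact_mod_cast h : (n : ℝ) < 2 * s))
    refine this.congr (Filter.Eventually.of_forall fun x => ?_)
    have e : -(2 * (s : ℝ)) / 2 = -(s : ℝ) := by ring
    simp only [e]
    rw [Real.rpow_neg (by positivity), Real.rpow_natCast]
    simp [Wt]
  have := hi.lintegral_lt_top
  exact this.ne

lemma Wt_inv_le (s : ℕ) {E : Type*} [NormedAddCommGroup E] (l : ℤ) (x : E) :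
    (Wt s l x)⁻¹ ≤ (Wt s 0 x)⁻¹ := by
  apply inv_anti₀ (Wt_pos _ _ _)
  unfold Wt
  have h : 1 + ‖x‖ ^ 2 + ((0 : ℤ) : ℝ) ^ 2 ≤ 1 + ‖x‖ ^ 2 + (l : ℝ) ^ 2 := by
    have := sq_nonneg (l : ℝ)
    simpa using this
  exact pow_le_pow_left₀ (by positivity) h s

lemma mode (s n : ℕ) (l : ℤ) (f g : EuclideanSpace ℝ (Fin n) → ℂ) (hf : Measurable f)
    (hg : Measurable g) (x : EuclideanSpace ℝ (Fin n)) :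
    ENNReal.ofReal (Wt s l x * ‖∫ y, f y * g (x - y)‖ ^ 2) ≤
      (2 * ∫⁻ y : EuclideanSpace ℝ (Fin n), ENNReal.ofReal ((Wt s 0 y)⁻¹)) * 4 ^ s *
      ∫⁻ y, ENNReal.ofReal (Wt s l y * ‖f y‖ ^ 2) *
        ENNReal.ofReal (Wt s l (x - y) * ‖g (x - y)‖ ^ 2) := by
  set A := ∫⁻ y : EuclideanSpace ℝ (Fin n), ENNReal.ofReal ((Wt s 0 y)⁻¹) with hA
  have hW := Wt_meas s l (n := n)
  have hW0 := Wt_meas s 0 (n := n)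
  set B : EuclideanSpace ℝ (Fin n) → ℝ := fun y => (Wt s l y)⁻¹ + (Wt s l (x - y))⁻¹ with hB
  have hB0 : ∀ y, 0 ≤ B y := fun y => by
    have h1 := Wt_pos s l y
    have h2 := Wt_pos s l (x - y)
    simp only [hB]; positivity
  set D : EuclideanSpace ℝ (Fin n) → ℝ := fun y =>
    (4 ^ s * (Wt s l y * Wt s l (x - y))) with hD
  have hD0 : ∀ y, 0 ≤ D y := fun y => by
    have h1 := Wt_pos s l y
    have h2 := Wt_pos s l (x - y)
    simp only [hD]; positivity
  have hBm : Measurable B := by simp only [hB]; fun_prop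
  have hDm : Measurable D := by simp only [hD]; fun_prop
  let h1 : EuclideanSpace ℝ (Fin n) → ℝ≥0∞ := fun y => ENNReal.ofReal (√(B y))
  let h2 : EuclideanSpace ℝ (Fin n) → ℝ≥0∞ := fun y =>
    ENNReal.ofReal (√(D y) * (‖f y‖ * ‖g (x - y)‖))
  have hh1 : Measurable h1 := by simp only [h1]; fun_prop
  have hh2 : Measurable h2 := by simp only [h2]; fun_prop
  have e0 : ENNReal.ofReal (√(Wt s l x) * ‖∫ y, f y * g (x - y)‖) ≤ ∫⁻ y, (h1 * h2) y := by
    rw [ENNReal.ofReal_mul (by positivity), ofReal_norm]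
    calc _ ≤ ENNReal.ofReal (√(Wt s l x)) * ∫⁻ y, ‖f y * g (x - y)‖ₑ := by
          gcongr; exact enorm_integral_le_lintegral_enorm _
      _ = ∫⁻ y, ENNReal.ofReal (√(Wt s l x)) * ‖f y * g (x - y)‖ₑ := by
          rw [lintegral_const_mul]; fun_prop
      _ ≤ _ := by
          apply lintegral_mono
          intro y
          simp only [h1, h2, Pi.mul_apply]
          rw [← ofReal_norm, ← ENNReal.ofReal_mul (by positivity),
            ← ENNReal.ofReal_mul (by positivity), norm_mul, ← mul_assoc (√(B y)),
            ← Real.sqrt_mul (hB0 y)]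
          apply ENNReal.ofReal_le_ofReal
          gcongr
          exact Wt_key s l x y
  have e1 := ENNReal.lintegral_mul_le_Lp_mul_Lq volume Real.HolderConjugate.two_two
    hh1.aemeasurable hh2.aemeasurable
  have e2 : (∫⁻ y, (h1 * h2) y) ^ 2 ≤ (∫⁻ y, h1 y ^ 2) * ∫⁻ y, h2 y ^ 2 := by
    calc _ ≤ _ := pow_le_pow_left₀ (by positivity) e1 2
      _ = _ := by
        rw [mul_pow, ← ENNReal.rpow_natCast, ← ENNReal.rpow_natCast, ← ENNReal.rpow_mul,
          ← ENNReal.rpow_mul]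
        norm_num
  have e3 : ∫⁻ y, h1 y ^ 2 ≤ 2 * A := by
    calc ∫⁻ y, h1 y ^ 2 ≤ ∫⁻ y, (ENNReal.ofReal ((Wt s 0 y)⁻¹) +
          ENNReal.ofReal ((Wt s 0 (x - y))⁻¹)) := by
          apply lintegral_mono
          intro y
          simp only [h1]
          rw [← ENNReal.ofReal_pow (by positivity), Real.sq_sqrt (hB0 y)]
          refine ENNReal.ofReal_add_le.trans ?_
          exact add_le_add (ENNReal.ofReal_le_ofReal (Wt_inv_le _ _ _))
            (ENNReal.ofReal_le_ofReal (Wt_inv_le _ _ _))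
      _ = A + A := by
          rw [lintegral_add_left (by fun_prop),
            lintegral_sub_left_eq_self (fun y => ENNReal.ofReal ((Wt s 0 y)⁻¹)) x]
      _ = 2 * A := (two_mul _).symm
  have e4 : ∫⁻ y, h2 y ^ 2 = 4 ^ s * ∫⁻ y, ENNReal.ofReal (Wt s l y * ‖f y‖ ^ 2) *
        ENNReal.ofReal (Wt s l (x - y) * ‖g (x - y)‖ ^ 2) := by
    rw [← lintegral_const_mul _ (by fun_prop)]
    apply lintegral_congr
    intro y
    have p1 := (Wt_pos s l y).le
    have p2 := (Wt_pos s l (x - y)).le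
    have : (4 : ℝ≥0∞) ^ s = ENNReal.ofReal (4 ^ s) := by
      rw [ENNReal.ofReal_pow (by norm_num)]; norm_num
    simp only [h2]
    rw [← ENNReal.ofReal_pow (by positivity), mul_pow, Real.sq_sqrt (hD0 y), this,
      ← ENNReal.ofReal_mul (by positivity), ← ENNReal.ofReal_mul (by positivity)]
    congr 1
    simp only [hD]; ring
  calc _ = ENNReal.ofReal (√(Wt s l x) * ‖∫ y, f y * g (x - y)‖) ^ 2 := by
        rw [← ENNReal.ofReal_pow (by positivity), mul_pow, Real.sq_sqrt (Wt_pos _ _ _).le]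
    _ ≤ (∫⁻ y, (h1 * h2) y) ^ 2 := pow_le_pow_left₀ (by positivity) e0 2
    _ ≤ _ := e2
    _ ≤ _ := by rw [e4, mul_assoc (2 * A)]; gcongr

lemma conv_int {n : ℕ} (φ ψ : EuclideanSpace ℝ (Fin n) → ℝ≥0∞) (hφ : Measurable φ)
    (hψ : Measurable ψ) :
    ∫⁻ x, ∫⁻ y, φ y * ψ (x - y) = (∫⁻ y, φ y) * ∫⁻ y, ψ y := by
  rw [lintegral_lintegral_swap (by fun_prop)]
  have : ∀ y, ∫⁻ x, φ y * ψ (x - y) = φ y * ∫⁻ x, ψ x := fun y => by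
    rw [lintegral_const_mul _ (by fun_prop), lintegral_sub_right_eq_self ψ y]
  simp_rw [this]
  rw [lintegral_mul_const _ hφ]

lemma Sob_eq (d s : ℕ) (u : EuclideanSpace ℝ (Fin (d - 1)) × ℤ → ℂ) (hu : Measurable u) :
    SobNormSq d s u = ∑' l : ℤ, ∫⁻ x, ENNReal.ofReal (Wt s l x * ‖u (x, l)‖ ^ 2) := by
  unfold SobNormSq
  rw [← lintegral_tsum]
  · rfl
  · intro l
    have := Wt_meas s l (n := d - 1)
    fun_prop

/-- **Estimate (3.29)** from the proof of Lemma 3.19 (Fourier side): if `2d* > d − 1`,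
the mode-diagonal product (convolution in the continuous variable only, with the same
discrete index) is bounded on `H^{d*}`: `‖w‖ ≤ C ‖u‖ ‖v‖`, stated with squared norms. -/
theorem stmt10 (d dstar : ℕ) (hd : 2 ≤ d) (hdstar : d - 1 < 2 * dstar) :
    ∃ C > 0, ∀ u v : EuclideanSpace ℝ (Fin (d - 1)) × ℤ → ℂ,
      Measurable u → Measurable v →
      SobNormSq d dstar u ≠ ⊤ → SobNormSq d dstar v ≠ ⊤ →
      SobNormSq d dstar (fun p => ∫ η, u (η, p.2) * v (p.1 - η, p.2))
        ≤ ENNReal.ofReal (C ^ 2) * SobNormSq d dstar u * SobNormSq d dstar v := by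
  set A := ∫⁻ y : EuclideanSpace ℝ (Fin (d - 1)), ENNReal.ofReal ((Wt dstar 0 y)⁻¹) with hA
  have hAf : A ≠ ⊤ := A_fin dstar (d - 1) hdstar
  have hM : 2 * A * 4 ^ dstar ≠ ⊤ :=
    ENNReal.mul_ne_top (ENNReal.mul_ne_top (by simp) hAf) (ENNReal.pow_ne_top (by simp))
  set M := 2 * A * 4 ^ dstar with hMd
  refine ⟨√(M.toReal + 1), by positivity, fun u v hu hv _ _ => ?_⟩
  have hMC : M ≤ ENNReal.ofReal (√(M.toReal + 1) ^ 2) := by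
    rw [Real.sq_sqrt (by positivity)]
    calc M = ENNReal.ofReal M.toReal := (ENNReal.ofReal_toReal hM).symm
      _ ≤ _ := ENNReal.ofReal_le_ofReal (by linarith)
  have hW := fun l => Wt_meas dstar l (n := d - 1)
  rw [Sob_eq d dstar u hu, Sob_eq d dstar v hv]
  set a : ℤ → ℝ≥0∞ := fun l => ∫⁻ x, ENNReal.ofReal (Wt dstar l x * ‖u (x, l)‖ ^ 2) with ha
  set b : ℤ → ℝ≥0∞ := fun l => ∫⁻ x, ENNReal.ofReal (Wt dstar l x * ‖v (x, l)‖ ^ 2) with hb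
  have hum : ∀ l, Measurable fun x => ENNReal.ofReal (Wt dstar l x * ‖u (x, l)‖ ^ 2) :=
    fun l => by have := hW l; fun_prop
  have hvm : ∀ l, Measurable fun x => ENNReal.ofReal (Wt dstar l x * ‖v (x, l)‖ ^ 2) :=
    fun l => by have := hW l; fun_prop
  have hcm : ∀ l, Measurable fun x => ∫⁻ y, ENNReal.ofReal (Wt dstar l y * ‖u (y, l)‖ ^ 2) *
      ENNReal.ofReal (Wt dstar l (x - y) * ‖v (x - y, l)‖ ^ 2) := fun l => by
    have := hW l
    apply Measurable.lintegral_prod_right'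
      (f := fun p : EuclideanSpace ℝ (Fin (d - 1)) × EuclideanSpace ℝ (Fin (d - 1)) =>
        ENNReal.ofReal (Wt dstar l p.2 * ‖u (p.2, l)‖ ^ 2) *
        ENNReal.ofReal (Wt dstar l (p.1 - p.2) * ‖v (p.1 - p.2, l)‖ ^ 2))
    fun_prop
  calc SobNormSq d dstar (fun p => ∫ η, u (η, p.2) * v (p.1 - η, p.2))
      ≤ ∫⁻ x, ∑' l : ℤ, M * ∫⁻ y, ENNReal.ofReal (Wt dstar l y * ‖u (y, l)‖ ^ 2) *
      ENNReal.ofReal (Wt dstar l (x - y) * ‖v (x - y, l)‖ ^ 2) := by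
        unfold SobNormSq
        apply lintegral_mono
        intro x
        apply ENNReal.tsum_le_tsum
        intro l
        exact mode dstar (d - 1) l (fun y => u (y, l)) (fun y => v (y, l)) (by fun_prop)
          (by fun_prop) x
    _ = ∑' l, M * (a l * b l) := by
        rw [lintegral_tsum (fun l => ((hcm l).const_mul M).aemeasurable)]
        refine tsum_congr fun l => ?_
        rw [lintegral_const_mul _ (hcm l)]
        congr 1
        exact conv_int _ _ (hum l) (hvm l)
    _ = M * ∑' l, a l * b l := ENNReal.tsum_mul_left
    _ ≤ M * ∑' l, a l * ∑' k, b k := by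
        gcongr with l
        exact ENNReal.le_tsum l
    _ = M * ((∑' l, a l) * ∑' l, b l) := by rw [ENNReal.tsum_mul_right]
    _ ≤ _ := by rw [← mul_assoc]; gcongr

end
end

section
/- Let 0 ≤ r₀ ≤ r₁ ≤ 1 and let (B_r)_{r₀ ≤ r ≤ r₁} be a decreasing scale of Banach spaces: all B_r are subspaces of a common vector space, and for r₀ ≤ r' < r ≤ r₁ one has B_r ⊆ B_{r'} with ‖u‖_{r'} ≤ ‖u‖_r for u ∈ B_r. Let T, R, C, M be positive reals, and let F be a map which, for every r₀ ≤ r' < r ≤ r₁, restricts to a continuous map from [−T,T] × {u ∈ B_r : ‖u‖_r < R} into B_{r'}, and which satisfies: (i) sup_{|t|≤T} ‖F(t,u) − F(t,v)‖_{r'} ≤ (C/(r−r')) ‖u−v‖_r for all r₀ ≤ r' < r ≤ r₁ and all u, v ∈ B_r with ‖u‖_r ≤ R and ‖v‖_r ≤ R; and (ii) sup_{|t|≤T} ‖F(t,0)‖_r ≤ M/(r₁−r) for every r₀ ≤ r < r₁. Then there exists δ ∈ (0,T) and a unique function u, belonging to C¹((−δ(r₁−r), δ(r₁−r)), B_r)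 for every r₀ ≤ r ≤ r₁, satisfying sup_{|t|<δ(r₁−r)} ‖u(t)‖_r < R, u(0) = 0, and u'(t) = F(t, u(t)) for |t| < δ(r₁−r). -/
open Set

namespace CK

structure NormOn {X : Type*} [AddCommGroup X] [Module ℝ X] (V : Submodule ℝ X) (N : X → ℝ) :
    Prop where
  nonneg : ∀ u ∈ V, 0 ≤ N u
  eq_zero : ∀ u ∈ V, (N u = 0 ↔ u = 0)
  add : ∀ u ∈ V, ∀ v ∈ V, N (u + v) ≤ N u + N v
  smul : ∀ c : ℝ, ∀ u ∈ V, N (c • u) = |c| * N u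
  complete : ∀ u : ℕ → X, (∀ n, u n ∈ V) →
      (∀ ε > 0, ∃ K : ℕ, ∀ p ≥ K, ∀ q ≥ K, N (u p - u q) < ε) →
      ∃ l ∈ V, ∀ ε > 0, ∃ K : ℕ, ∀ n ≥ K, N (u n - l) < ε

variable {X : Type*} [AddCommGroup X] [Module ℝ X] {V : Submodule ℝ X} {N : X → ℝ}

@[nolint unusedArguments]
def NS (_h : NormOn V N) : Type _ := V

instance (h : NormOn V N) : AddCommGroup (NS h) := inferInstanceAs (AddCommGroup V)
instance (h : NormOn V N) : Module ℝ (NS h) := inferInstanceAs (Module ℝ V)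

def val (h : NormOn V N) : NS h →ₗ[ℝ] X := V.subtype

theorem val_mem (h : NormOn V N) (x : NS h) : val h x ∈ V := Subtype.property (p := fun y => y ∈ V) x

def mkS (h : NormOn V N) (x : X) (m : x ∈ V) : NS h := (⟨x, m⟩ : V)

theorem val_mkS (h : NormOn V N) (x : X) (m : x ∈ V) : val h (mkS h x m) = x := rfl

theorem val_inj (h : NormOn V N) {x y : NS h} (e : val h x = val h y) : x = y :=
  Subtype.ext (p := fun y => y ∈ V) e

instance (h : NormOn V N) : Norm (NS h) := ⟨fun x => N (val h x)⟩

theorem norm_def (h : NormOn V N) (x : NS h) : ‖x‖ = N (val h x) := rfl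

theorem core (h : NormOn V N) : NormedSpace.Core ℝ (NS h) where
  norm_nonneg x := h.nonneg _ (val_mem h x)
  norm_smul c x := by
    rw [norm_def, norm_def, map_smul, h.smul _ _ (val_mem h x), Real.norm_eq_abs]
  norm_triangle x y := by
    rw [norm_def, map_add]; exact h.add _ (val_mem h x) _ (val_mem h y)
  norm_eq_zero_iff x := by
    rw [norm_def, h.eq_zero _ (val_mem h x)]
    exact ⟨fun e => val_inj h (by rw [e, map_zero]), fun e => by rw [e, map_zero]⟩

noncomputable instance (h : NormOn V N) : NormedAddCommGroup (NS h) :=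
  NormedAddCommGroup.ofCore (core h)
noncomputable instance (h : NormOn V N) : NormedSpace ℝ (NS h) := NormedSpace.ofCore (core h)

instance (h : NormOn V N) : CompleteSpace (NS h) := by
  apply Metric.complete_of_cauchySeq_tendsto
  intro u hu
  rw [Metric.cauchySeq_iff] at hu
  obtain ⟨l, hl, hl'⟩ := h.complete (fun n => val h (u n)) (fun n => val_mem h _) (by
    intro ε hε
    obtain ⟨K, hK⟩ := hu ε hε
    refine ⟨K, fun p hp q hq => ?_⟩
    have := hK p hp q hq
    rw [dist_eq_norm, norm_def, map_sub] at this
    exact this)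
  refine ⟨mkS h l hl, ?_⟩
  rw [Metric.tendsto_atTop]
  intro ε hε
  obtain ⟨K, hK⟩ := hl' ε hε
  refine ⟨K, fun n hn => ?_⟩
  rw [dist_eq_norm, norm_def, map_sub]
  exact hK n hn

open Classical in
noncomputable def lf (h : NormOn V N) (f : ℝ → X) (t : ℝ) : NS h :=
  if m : f t ∈ V then mkS h (f t) m else 0

theorem val_lf (h : NormOn V N) {f : ℝ → X} {t : ℝ} (m : f t ∈ V) : val h (lf h f t) = f t := by
  unfold lf; rw [dif_pos m]; rfl

def Der (N : X → ℝ) (d : ℝ) (f g : ℝ → X) : Prop :=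
  ∀ t : ℝ, |t| < d → ∀ ε > 0, ∃ η > 0, ∀ h : ℝ, h ≠ 0 → |h| < η → |t + h| < d →
    N (f (t + h) - f t - h • g t) ≤ ε * |h|

def Cts (N : X → ℝ) (d : ℝ) (f : ℝ → X) : Prop :=
  ∀ t : ℝ, |t| < d → ∀ ε > 0, ∃ η > 0, ∀ s : ℝ, |s - t| < η → |s| < d → N (f s - f t) < ε

def Mem (V : Submodule ℝ X) (d : ℝ) (f : ℝ → X) : Prop := ∀ t : ℝ, |t| < d → f t ∈ V

theorem NormOn.zero (h : NormOn V N) : N 0 = 0 := (h.eq_zero 0 V.zero_mem).2 rfl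

theorem NormOn.sub (h : NormOn V N) {u v : X} (hu : u ∈ V) (hv : v ∈ V) :
    N (u - v) ≤ N u + N v := by
  have := norm_sub_le (E := NS h) (mkS h u hu) (mkS h v hv)
  exact this

theorem NormOn.comm (h : NormOn V N) {u v : X} (hu : u ∈ V) (hv : v ∈ V) :
    N (u - v) = N (v - u) := by
  have := norm_sub_rev (E := NS h) (mkS h u hu) (mkS h v hv)
  exact this

theorem NormOn.tri (h : NormOn V N) {u v w : X} (hu : u ∈ V) (hv : v ∈ V) (hw : w ∈ V) :
    N (u - w) ≤ N (u - v) + N (v - w) := by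
  have := norm_sub_le_norm_sub_add_norm_sub (E := NS h) (mkS h u hu) (mkS h v hv) (mkS h w hw)
  exact this

theorem Der.hasDerivAt (h : NormOn V N) {d : ℝ} {f g : ℝ → X} (hf : Mem V d f) (hg : Mem V d g)
    (H : Der N d f g) {t : ℝ} (ht : |t| < d) : HasDerivAt (lf h f) (lf h g t) t := by
  rw [hasDerivAt_iff_isLittleO_nhds_zero, Asymptotics.isLittleO_iff]
  intro ε hε
  obtain ⟨η, hη, H⟩ := H t ht ε hε
  rw [Metric.eventually_nhds_iff]
  refine ⟨min η (d - |t|), lt_min hη (by linarith), fun k hk => ?_⟩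
  rw [dist_zero_right, Real.norm_eq_abs, lt_min_iff] at hk
  have hk2 : |t + k| < d := by have := abs_add_le t k; linarith [hk.2]
  by_cases k0 : k = 0
  · subst k0; simp
  have := H k k0 hk.1 hk2
  rw [norm_def, map_sub, map_sub, map_smul, val_lf h (hf _ hk2), val_lf h (hf _ ht),
    val_lf h (hg _ ht)]
  exact this

theorem Der.of_hasDerivAt (h : NormOn V N) {d : ℝ} {f g : ℝ → X} (hf : Mem V d f) (hg : Mem V d g)
    (H : ∀ t, |t| < d → HasDerivAt (lf h f) (lf h g t) t) : Der N d f g := by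
  intro t ht ε hε
  have H := H t ht
  rw [hasDerivAt_iff_isLittleO_nhds_zero, Asymptotics.isLittleO_iff] at H
  have H := H hε
  rw [Metric.eventually_nhds_iff] at H
  obtain ⟨η, hη, H⟩ := H
  refine ⟨η, hη, fun k _ hk hk2 => ?_⟩
  have := H (y := k) (by simpa using hk)
  rw [norm_def, map_sub, map_sub, map_smul, val_lf h (hf _ hk2), val_lf h (hf _ ht),
    val_lf h (hg _ ht)] at this
  exact this

theorem Cts.continuousAt (h : NormOn V N) {d : ℝ} {f : ℝ → X} (hf : Mem V d f)
    (H : Cts N d f) {t : ℝ} (ht : |t| < d) : ContinuousAt (lf h f) t := by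
  rw [Metric.continuousAt_iff]
  intro ε hε
  obtain ⟨η, hη, H⟩ := H t ht ε hε
  refine ⟨min η (d - |t|), lt_min hη (by linarith), fun {s} hs => ?_⟩
  rw [Real.dist_eq, lt_min_iff] at hs
  have hs2 : |s| < d := by
    have := abs_sub_abs_le_abs_sub s t; linarith [hs.2]
  rw [dist_eq_norm, norm_def, map_sub, val_lf h (hf _ hs2), val_lf h (hf _ ht)]
  exact H s hs.1 hs2

theorem Der.cts (h : NormOn V N) {d : ℝ} {f g : ℝ → X} (hf : Mem V d f) (hg : Mem V d g)
    (H : Der N d f g) : Cts N d f := by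
  intro t ht ε hε
  have := (H.hasDerivAt h hf hg ht).continuousAt
  rw [Metric.continuousAt_iff] at this
  obtain ⟨η, hη, H⟩ := this ε hε
  refine ⟨η, hη, fun s hs hs2 => ?_⟩
  have := H (x := s) (by rwa [Real.dist_eq])
  rw [dist_eq_norm, norm_def, map_sub, val_lf h (hf _ hs2), val_lf h (hf _ ht)] at this
  exact this

theorem Der.mono {d d' : ℝ} (hd : d' ≤ d) {f g : ℝ → X}
    (H : Der N d f g) : Der N d' f g := by
  intro t ht ε hε
  obtain ⟨η, hη, H⟩ := H t (by linarith) ε hε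
  exact ⟨η, hη, fun k k0 hk hk2 => H k k0 hk (by linarith)⟩

theorem Der.sub (h : NormOn V N) {d : ℝ} {f g f' g' : ℝ → X} (hf : Mem V d f) (hg : Mem V d g)
    (hf' : Mem V d f') (hg' : Mem V d g')
    (H : Der N d f g) (H' : Der N d f' g') :
    Der N d (fun t => f t - f' t) (fun t => g t - g' t) := by
  intro t ht ε hε
  obtain ⟨η, hη, H⟩ := H t ht (ε / 2) (by linarith)
  obtain ⟨η', hη', H'⟩ := H' t ht (ε / 2) (by linarith)
  refine ⟨min η η', lt_min hη hη', fun k k0 hk hk2 => ?_⟩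
  rw [lt_min_iff] at hk
  have h1 := H k k0 hk.1 hk2
  have h2 := H' k k0 hk.2 hk2
  have h3 := h.sub (V.sub_mem (V.sub_mem (hf _ hk2) (hf _ ht)) (V.smul_mem k (hg _ ht)))
    (V.sub_mem (V.sub_mem (hf' _ hk2) (hf' _ ht)) (V.smul_mem k (hg' _ ht)))
  have e : f (t + k) - f' (t + k) - (f t - f' t) - k • (g t - g' t) =
    (f (t + k) - f t - k • g t) - (f' (t + k) - f' t - k • g' t) := by
    rw [smul_sub]; abel
  simp only [e]
  linarith

/-- local character of derivatives -/
theorem Der.of_local {d : ℝ} {f g : ℝ → X}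
    (H : ∀ t, |t| < d → ∃ d', |t| < d' ∧ Der N d' f g) : Der N d f g := by
  intro t ht ε hε
  obtain ⟨d', hd', H⟩ := H t ht
  obtain ⟨η, hη, H⟩ := H t hd' ε hε
  refine ⟨min η (d' - |t|), lt_min hη (by linarith), fun k k0 hk hk2 => ?_⟩
  rw [lt_min_iff] at hk
  exact H k k0 hk.1 (by have := abs_add_le t k; linarith [hk.2])

theorem mv_pos {E : Type*} [NormedAddCommGroup E] [NormedSpace ℝ E] {d K : ℝ} {f g : ℝ → E}
    (H : ∀ t, |t| < d → HasDerivAt f (g t) t) (f0 : f 0 = 0)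
    (hg : ∀ t, |t| < d → ‖g t‖ ≤ K * (d / (d - |t|) ^ 2)) {t : ℝ} (ht0 : 0 ≤ t) (ht : t < d) :
    ‖f t‖ ≤ K * (t / (d - t)) := by
  have ab : ∀ x ∈ Icc 0 t, |x| < d := fun x hx => by rw [abs_of_nonneg hx.1]; linarith [hx.2]
  have hB : ∀ x ∈ Icc 0 t, HasDerivAt (fun x => K * (x / (d - x))) (K * (d / (d - |x|) ^ 2)) x := by
    intro x hx
    have hne : d - x ≠ 0 := by have := hx.2; intro e; linarith
    have := (((hasDerivAt_id x).div ((hasDerivAt_const x d).sub (hasDerivAt_id x)) hne).const_mul K)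
    refine HasDerivAt.congr_deriv this ?_
    rw [abs_of_nonneg hx.1]
    simp
  refine image_norm_le_of_norm_deriv_right_le_deriv_boundary' (f := f) (f' := g) (a := 0) (b := t)
    (B := fun x => K * (x / (d - x))) (B' := fun x => K * (d / (d - |x|) ^ 2))
    (fun x hx => (H x (ab x hx)).continuousAt.continuousWithinAt)
    (fun x hx => (H x (ab x (Ico_subset_Icc_self hx))).hasDerivWithinAt)
    (by simp [f0])
    (fun x hx => (hB x hx).continuousAt.continuousWithinAt)
    (fun x hx => (hB x (Ico_subset_Icc_self hx)).hasDerivWithinAt)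
    (fun x hx => hg x (ab x (Ico_subset_Icc_self hx))) ⟨ht0, le_rfl⟩

theorem mv {E : Type*} [NormedAddCommGroup E] [NormedSpace ℝ E] {d K : ℝ} {f g : ℝ → E}
    (H : ∀ t, |t| < d → HasDerivAt f (g t) t) (f0 : f 0 = 0)
    (hg : ∀ t, |t| < d → ‖g t‖ ≤ K * (d / (d - |t|) ^ 2)) {t : ℝ} (ht : |t| < d) :
    ‖f t‖ ≤ K * (|t| / (d - |t|)) := by
  rcases le_total 0 t with h | h
  · rw [abs_of_nonneg h] at ht ⊢
    exact mv_pos H f0 hg h ht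
  · rw [abs_of_nonpos h] at ht ⊢
    have := mv_pos (f := fun x => f (-x)) (g := fun x => - g (-x)) (d := d) (K := K)
      (fun x hx => by
        have := (H (-x) (by rwa [abs_neg])).scomp x (hasDerivAt_neg x)
        exact this.congr_deriv (by simp)) (by simpa using f0)
      (fun x hx => by
        have := hg (-x) (by rwa [abs_neg])
        rwa [norm_neg, ← abs_neg x]) (t := -t) (by linarith) ht
    simpa using this

theorem mvN (h : NormOn V N) {d K : ℝ} {f g : ℝ → X} (hf : Mem V d f) (hg : Mem V d g)
    (H : Der N d f g) (f0 : f 0 = 0)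
    (hb : ∀ t, |t| < d → N (g t) ≤ K * (d / (d - |t|) ^ 2)) {t : ℝ} (ht : |t| < d) :
    N (f t) ≤ K * (|t| / (d - |t|)) := by
  have d0 : |(0 : ℝ)| < d := by rw [abs_zero]; exact (abs_nonneg t).trans_lt ht
  have := mv (f := lf h f) (g := lf h g) (d := d) (K := K) (fun t ht => H.hasDerivAt h hf hg ht)
    (val_inj h (by rw [val_lf h (hf _ d0), f0, map_zero]))
    (fun t ht => by rw [norm_def, val_lf h (hg _ ht)]; exact hb t ht) ht
  rwa [norm_def, val_lf h (hf _ ht)] at this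

theorem exists_prim (h : NormOn V N) {d : ℝ} {g : ℝ → X} (hg : Mem V d g) (hc : Cts N d g) :
    ∃ f : ℝ → X, f 0 = 0 ∧ Mem V d f ∧ Der N d f g := by
  have hI : ∀ t, |t| < d → t ∈ Ioo (-d) d := fun t ht => abs_lt.1 ht
  have hcont : ContinuousOn (lf h g) (Ioo (-d) d) := fun t ht =>
    (hc.continuousAt h hg (abs_lt.2 ht)).continuousWithinAt
  refine ⟨fun t => val h (∫ s in (0 : ℝ)..t, lf h g s), by simp, fun t _ => val_mem h _, ?_⟩
  refine Der.of_hasDerivAt h (fun t _ => val_mem h _) hg fun t ht => ?_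
  have e : lf h (fun t => val h (∫ s in (0 : ℝ)..t, lf h g s)) =
      fun t => ∫ s in (0 : ℝ)..t, lf h g s := by
    funext t
    exact val_inj h (val_lf h (val_mem h _))
  rw [e]
  have d0 : (0 : ℝ) ∈ Ioo (-d) d := by
    have := (abs_nonneg t).trans_lt ht
    constructor <;> linarith
  apply intervalIntegral.integral_hasDerivAt_right
  · apply ContinuousOn.intervalIntegrable
    exact hcont.mono (OrdConnected.uIcc_subset ordConnected_Ioo d0 (hI t ht))
  · exact hcont.stronglyMeasurableAtFilter isOpen_Ioo _ (hI t ht)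
  · exact hc.continuousAt h hg ht

theorem der_lim (h : NormOn V N) {d : ℝ} {f g : ℝ → X} {F G : ℕ → ℝ → X}
    (hf : Mem V d f) (hg : Mem V d g) (hF : ∀ n, Mem V d (F n)) (hG : ∀ n, Mem V d (G n))
    (H : ∀ n, Der N d (F n) (G n)) {c c' : ℝ}
    (hl : ∀ n t, |t| < d → N (F n t - f t) ≤ c * (1 / 2) ^ n)
    (hl' : ∀ n t, |t| < d → N (G n t - g t) ≤ c' * (1 / 2) ^ n) : Der N d f g := by
  have tz : ∀ c : ℝ, Filter.Tendsto (fun n : ℕ => c * (1 / 2 : ℝ) ^ n) Filter.atTop (nhds 0) := by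
    intro c
    have := (tendsto_pow_atTop_nhds_zero_of_lt_one (r := (1 / 2 : ℝ)) (by norm_num)
      (by norm_num)).const_mul c
    simpa using this
  refine Der.of_hasDerivAt h hf hg fun t ht => ?_
  refine hasDerivAt_of_tendstoUniformlyOn (l := Filter.atTop) (s := Ioo (-d) d) isOpen_Ioo
    (f := fun n => lf h (F n)) (f' := fun n => lf h (G n)) ?_
    (Filter.Eventually.of_forall fun n x hx => (H n).hasDerivAt h (hF n) (hG n) (abs_lt.2 hx))
    ?_ (abs_lt.1 ht)
  · rw [Metric.tendstoUniformlyOn_iff]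
    intro ε hε
    filter_upwards [(tz c').eventually (gt_mem_nhds hε)] with n hn x hx
    have hx := abs_lt.2 hx
    rw [dist_comm, dist_eq_norm, norm_def, map_sub, val_lf h (hG n _ hx), val_lf h (hg _ hx)]
    exact (hl' n x hx).trans_lt hn
  · intro x hx
    have hx := abs_lt.2 hx
    rw [tendsto_iff_dist_tendsto_zero]
    refine squeeze_zero (fun _ => dist_nonneg) (fun n => ?_) (tz c)
    rw [dist_eq_norm, norm_def, map_sub, val_lf h (hF n _ hx), val_lf h (hf _ hx)]
    exact hl n x hx

/-- limit of a geometrically Cauchy sequence -/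
theorem geom_lim (h : NormOn V N) {c : ℝ} {u : ℕ → X} (hu : ∀ n, u n ∈ V)
    (hc : ∀ n, N (u (n + 1) - u n) ≤ c / 2 / 2 ^ n) :
    ∃ l ∈ V, ∀ n, N (u n - l) ≤ c / 2 ^ n := by
  let w : ℕ → NS h := fun n => mkS h (u n) (hu n)
  have hw : ∀ n, dist (w n) (w (n + 1)) ≤ c / 2 / 2 ^ n := fun n => by
    rw [dist_comm, dist_eq_norm]; exact hc n
  have hcs := cauchySeq_of_le_geometric_two hw
  obtain ⟨l, hl⟩ := cauchySeq_tendsto_of_complete hcs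
  refine ⟨val h l, val_mem h l, fun n => ?_⟩
  have := dist_le_of_le_geometric_two_of_tendsto hw hl n
  rw [dist_eq_norm] at this
  exact this

structure Sc (r₀ r₁ : ℝ) (B : ℝ → Submodule ℝ X) (N : ℝ → X → ℝ) (T R C : ℝ)
    (F : ℝ → X → X) : Prop where
  h01 : r₀ ≤ r₁
  le1 : r₁ - r₀ ≤ 1
  norm : ∀ r ∈ Icc r₀ r₁, NormOn (B r) (N r)
  Bmono : ∀ r' r : ℝ, r₀ ≤ r' → r' < r → r ≤ r₁ → B r ≤ B r'
  Nmono : ∀ r' r : ℝ, r₀ ≤ r' → r' < r → r ≤ r₁ → ∀ u ∈ B r, N r' u ≤ N r u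
  hC : 0 < C
  hR : 0 < R
  Fmem : ∀ r' r : ℝ, r₀ ≤ r' → r' < r → r ≤ r₁ → ∀ t ∈ Icc (-T) T,
      ∀ u ∈ B r, N r u < R → F t u ∈ B r'
  Fcont : ∀ r' r : ℝ, r₀ ≤ r' → r' < r → r ≤ r₁ → ∀ t ∈ Icc (-T) T,
      ∀ u ∈ B r, N r u < R → ∀ ε > 0, ∃ η > 0, ∀ t' ∈ Icc (-T) T, ∀ u' ∈ B r,
        N r u' < R → |t' - t| < η → N r (u' - u) < η → N r' (F t' u' - F t u) < ε
  Flip : ∀ r' r : ℝ, r₀ ≤ r' → r' < r → r ≤ r₁ → ∀ t ∈ Icc (-T) T,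
      ∀ u ∈ B r, ∀ v ∈ B r, N r u ≤ R → N r v ≤ R →
        N r' (F t u - F t v) ≤ C / (r - r') * N r (u - v)

section scale

variable {r₀ r₁ : ℝ} {B : ℝ → Submodule ℝ X} {N : ℝ → X → ℝ} {T R C : ℝ} {F : ℝ → X → X}

def MemA (r₀ r₁ : ℝ) (B : ℝ → Submodule ℝ X) (a : ℝ) (u : ℝ → X) : Prop :=
  ∀ r ∈ Icc r₀ r₁, Mem (B r) (a * (r₁ - r)) u

def CtsA (r₀ r₁ : ℝ) (N : ℝ → X → ℝ) (a : ℝ) (u : ℝ → X) : Prop :=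
  ∀ r ∈ Icc r₀ r₁, Cts (N r) (a * (r₁ - r)) u

def DerA (r₀ r₁ : ℝ) (N : ℝ → X → ℝ) (a : ℝ) (u g : ℝ → X) : Prop :=
  ∀ r ∈ Icc r₀ r₁, Der (N r) (a * (r₁ - r)) u g

def BdA (r₀ r₁ : ℝ) (N : ℝ → X → ℝ) (R a : ℝ) (u : ℝ → X) : Prop :=
  ∀ r ∈ Icc r₀ r₁, ∀ t : ℝ, |t| < a * (r₁ - r) → N r (u t) < R

def WtA (r₀ r₁ : ℝ) (N : ℝ → X → ℝ) (K a : ℝ) (u : ℝ → X) : Prop :=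
  ∀ r ∈ Icc r₀ r₁, ∀ t : ℝ, |t| < a * (r₁ - r) → N r (u t) ≤ K * (|t| / (a * (r₁ - r) - |t|))

theorem room {a r t : ℝ} (ha : 0 < a) (hr : r ∈ Icc r₀ r₁) (ht : |t| < a * (r₁ - r)) :
    ∃ r' ∈ Icc r₀ r₁, r < r' ∧ |t| < a * (r₁ - r') ∧ r' - r = (a * (r₁ - r) - |t|) / (2 * a) ∧
      a * (r₁ - r') - |t| = (a * (r₁ - r) - |t|) / 2 := by
  have h1 : (r + r₁ - |t| / a) / 2 - r = (a * (r₁ - r) - |t|) / (2 * a) := by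
    field_simp; ring
  have h2 : a * (r₁ - (r + r₁ - |t| / a) / 2) - |t| = (a * (r₁ - r) - |t|) / 2 := by
    field_simp; ring
  have h3 : 0 < (a * (r₁ - r) - |t|) / (2 * a) := div_pos (by linarith) (by linarith)
  have h4 : 0 ≤ |t| / a := by positivity
  have h5 := hr.1
  have h6 := hr.2
  refine ⟨(r + r₁ - |t| / a) / 2, ⟨by linarith, by linarith⟩, by linarith, by linarith, h1, h2⟩

theorem Sc.tmem (_S : Sc r₀ r₁ B N T R C F) {a r t : ℝ} (ha : 0 < a) (haT : a ≤ T)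
    (hr : r ∈ Icc r₀ r₁) (ht : |t| < a * (r₁ - r)) : t ∈ Icc (-T) T := by
  have h1 := hr.1
  have h2 := _S.le1
  have : a * (r₁ - r) ≤ a * 1 := by gcongr; linarith
  exact abs_le.1 (by linarith)

theorem Sc.F_mem (S : Sc r₀ r₁ B N T R C F) {a : ℝ} (ha : 0 < a) (haT : a ≤ T) {u : ℝ → X}
    (hu : MemA r₀ r₁ B a u) (hb : BdA r₀ r₁ N R a u) : MemA r₀ r₁ B a (fun t => F t (u t)) := by
  intro r hr t ht
  obtain ⟨r', hr', hlt, ht', -, -⟩ := room ha hr ht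
  exact S.Fmem r r' hr.1 hlt hr'.2 t (S.tmem ha haT hr ht) _ (hu r' hr' t ht') (hb r' hr' t ht')

theorem Sc.F_cts (S : Sc r₀ r₁ B N T R C F) {a : ℝ} (ha : 0 < a) (haT : a ≤ T) {u : ℝ → X}
    (hu : MemA r₀ r₁ B a u) (hb : BdA r₀ r₁ N R a u) (hc : CtsA r₀ r₁ N a u) :
    CtsA r₀ r₁ N a (fun t => F t (u t)) := by
  intro r hr t ht ε hε
  obtain ⟨r', hr', hlt, ht', -, -⟩ := room ha hr ht
  obtain ⟨η, hη, H⟩ := S.Fcont r r' hr.1 hlt hr'.2 t (S.tmem ha haT hr ht) _ (hu r' hr' t ht')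
    (hb r' hr' t ht') ε hε
  obtain ⟨η', hη', H'⟩ := hc r' hr' t ht' η hη
  refine ⟨min (min η η') (a * (r₁ - r') - |t|), lt_min (lt_min hη hη') (by linarith),
    fun s hs hs2 => ?_⟩
  rw [lt_min_iff, lt_min_iff] at hs
  have hs' : |s| < a * (r₁ - r') := by
    have := abs_sub_abs_le_abs_sub s t; linarith [hs.2]
  exact H s (S.tmem ha haT hr hs2) _ (hu r' hr' s hs') (hb r' hr' s hs') hs.1.1
    (H' s hs.1.2 hs')

theorem Sc.Nle (S : Sc r₀ r₁ B N T R C F) {r : ℝ} (hr : r ∈ Icc r₀ r₁) {x : X} (hx : x ∈ B r) :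
    N r₀ x ≤ N r x := by
  rcases hr.1.eq_or_lt with h | h
  · rw [h]
  · exact S.Nmono r₀ r le_rfl h hr.2 x hx

theorem Sc.Ble (S : Sc r₀ r₁ B N T R C F) {r : ℝ} (hr : r ∈ Icc r₀ r₁) {x : X} (hx : x ∈ B r) :
    x ∈ B r₀ := by
  rcases hr.1.eq_or_lt with h | h
  · rw [h]; exact hx
  · exact S.Bmono r₀ r le_rfl h hr.2 hx

theorem Sc.prim (S : Sc r₀ r₁ B N T R C F) {a : ℝ} (ha : 0 < a) {g : ℝ → X}
    (hg : MemA r₀ r₁ B a g) (hc : CtsA r₀ r₁ N a g) :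
    ∃ f : ℝ → X, f 0 = 0 ∧ MemA r₀ r₁ B a f ∧ DerA r₀ r₁ N a f g := by
  have h0 : r₀ ∈ Icc r₀ r₁ := ⟨le_rfl, S.h01⟩
  have n0 := S.norm r₀ h0
  obtain ⟨f, f0, fm, fd⟩ := exists_prim n0 (hg r₀ h0) (hc r₀ h0)
  have key : ∀ r ∈ Icc r₀ r₁, ∃ f' : ℝ → X, Mem (B r) (a * (r₁ - r)) f' ∧
      Der (N r) (a * (r₁ - r)) f' g ∧ ∀ t, |t| < a * (r₁ - r) → f t = f' t := by
    intro r hr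
    obtain ⟨f', f0', fm', fd'⟩ := exists_prim (S.norm r hr) (hg r hr) (hc r hr)
    refine ⟨f', fm', fd', ?_⟩
    have hle : a * (r₁ - r) ≤ a * (r₁ - r₀) := by
      have := hr.1
      gcongr
    have m1 : Mem (B r₀) (a * (r₁ - r)) f := fun t ht => fm t (by linarith)
    have m2 : Mem (B r₀) (a * (r₁ - r)) g := fun t ht => hg r₀ h0 t (by linarith)
    have m3 : Mem (B r₀) (a * (r₁ - r)) f' := fun t ht => S.Ble hr (fm' t ht)
    have d3 : Der (N r₀) (a * (r₁ - r)) f' g := by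
      intro t ht ε hε
      obtain ⟨η, hη, H⟩ := fd' t ht ε hε
      refine ⟨η, hη, fun k k0 hk hk2 => le_trans (S.Nle hr ?_) (H k k0 hk hk2)⟩
      exact (B r).sub_mem ((B r).sub_mem (fm' _ hk2) (fm' _ ht)) ((B r).smul_mem k (hg r hr _ ht))
    have d4 := Der.sub n0 m1 m2 m3 m2 (fd.mono hle) d3
    intro t ht
    have hm : Mem (B r₀) (a * (r₁ - r)) fun t => f t - f' t := fun t ht =>
      (B r₀).sub_mem (m1 t ht) (m3 t ht)
    have := mvN n0 (K := 0) hm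
      (fun t ht => (B r₀).sub_mem (m2 t ht) (m2 t ht)) d4 (by simp [f0, f0'])
      (fun t ht => by rw [sub_self, n0.zero]; simp) ht
    rw [zero_mul] at this
    have := (n0.eq_zero _ (hm t ht)).1 (le_antisymm this (n0.nonneg _ (hm t ht)))
    exact sub_eq_zero.1 this
  refine ⟨f, f0, fun r hr t ht => ?_, fun r hr t ht ε hε => ?_⟩
  · obtain ⟨f', fm', -, e⟩ := key r hr
    rw [e t ht]; exact fm' t ht
  · obtain ⟨f', -, fd', e⟩ := key r hr
    obtain ⟨η, hη, H⟩ := fd' t ht ε hε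
    refine ⟨η, hη, fun k k0 hk hk2 => ?_⟩
    rw [e _ ht, e _ hk2]; exact H k k0 hk hk2

/-- The contraction estimate. -/
theorem Sc.contr (S : Sc r₀ r₁ B N T R C F) {a K : ℝ} (ha : 0 < a) (haT : a ≤ T) (hK : 0 ≤ K)
    {u v z : ℝ → X}
    (hu : MemA r₀ r₁ B a u) (hub : BdA r₀ r₁ N R a u)
    (hv : MemA r₀ r₁ B a v) (hvb : BdA r₀ r₁ N R a v)
    (hz : MemA r₀ r₁ B a z) (z0 : z 0 = 0)
    (hd : DerA r₀ r₁ N a z (fun t => F t (u t) - F t (v t)))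
    (hw : WtA r₀ r₁ N K a (fun t => u t - v t)) : WtA r₀ r₁ N (4 * a * C * K) a z := by
  intro r hr t ht
  refine mvN (S.norm r hr) (hz r hr) (fun t ht => (B r).sub_mem (S.F_mem ha haT hu hub r hr t ht)
    (S.F_mem ha haT hv hvb r hr t ht)) (hd r hr) z0 (fun s hs => ?_) ht
  obtain ⟨r', hr', hlt, hs', e1, e2⟩ := room ha hr hs
  have h1 := S.Flip r r' hr.1 hlt hr'.2 s (S.tmem ha haT hr hs) _ (hu r' hr' s hs') _
    (hv r' hr' s hs') (hub r' hr' s hs').le (hvb r' hr' s hs').le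
  have h2 := hw r' hr' s hs'
  rw [e1] at h1
  simp only [e2] at h2
  have hC := S.hC
  set D := a * (r₁ - r) with hD
  have hp : 0 < D - |s| := by linarith
  refine h1.trans ?_
  calc C / ((D - |s|) / (2 * a)) * N r' (u s - v s)
      ≤ C / ((D - |s|) / (2 * a)) * (K * (D / ((D - |s|) / 2))) := by
        gcongr
        refine h2.trans ?_
        gcongr
    _ = 4 * a * C * K * (D / (D - |s|) ^ 2) := by
        field_simp; ring

theorem ale {a a' r : ℝ} (h : a' ≤ a) (hr : r ∈ Icc r₀ r₁) : a' * (r₁ - r) ≤ a * (r₁ - r) :=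
  mul_le_mul_of_nonneg_right h (by linarith [hr.2])

theorem MemA.mono {a a' : ℝ} {u : ℝ → X} (h : a' ≤ a) (H : MemA r₀ r₁ B a u) :
    MemA r₀ r₁ B a' u := fun r hr t ht => H r hr t (ht.trans_le (ale h hr))

theorem DerA.mono {a a' : ℝ} {u g : ℝ → X} (h : a' ≤ a) (H : DerA r₀ r₁ N a u g) :
    DerA r₀ r₁ N a' u g := fun r hr => (H r hr).mono (ale h hr)

theorem BdA.mono {a a' : ℝ} {u : ℝ → X} (h : a' ≤ a) (H : BdA r₀ r₁ N R a u) :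
    BdA r₀ r₁ N R a' u := fun r hr t ht => H r hr t (ht.trans_le (ale h hr))

theorem WtA.mono {a a' K K' : ℝ} {u : ℝ → X} (h : a' ≤ a) (hK : K ≤ K') (hK0 : 0 ≤ K')
    (H : WtA r₀ r₁ N K a u) : WtA r₀ r₁ N K' a' u := by
  intro r hr t ht
  have h1 := ale h hr
  have h3 : 0 < a' * (r₁ - r) - |t| := by linarith
  have h4 : 0 < a * (r₁ - r) - |t| := by linarith
  refine (H r hr t (by linarith)).trans ?_
  gcongr

theorem Sc.DerA_sub (S : Sc r₀ r₁ B N T R C F) {a : ℝ} {f g f' g' : ℝ → X}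
    (hf : MemA r₀ r₁ B a f) (hg : MemA r₀ r₁ B a g)
    (hf' : MemA r₀ r₁ B a f') (hg' : MemA r₀ r₁ B a g')
    (H : DerA r₀ r₁ N a f g) (H' : DerA r₀ r₁ N a f' g') :
    DerA r₀ r₁ N a (fun t => f t - f' t) (fun t => g t - g' t) := fun r hr =>
  Der.sub (S.norm r hr) (hf r hr) (hg r hr) (hf' r hr) (hg' r hr) (H r hr) (H' r hr)

theorem MemA.sub {a : ℝ} {u v : ℝ → X} (hu : MemA r₀ r₁ B a u) (hv : MemA r₀ r₁ B a v) :
    MemA r₀ r₁ B a (fun t => u t - v t) := fun r hr t ht =>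
  (B r).sub_mem (hu r hr t ht) (hv r hr t ht)

theorem Sc.DerA_cts (S : Sc r₀ r₁ B N T R C F) {a : ℝ} {f g : ℝ → X}
    (hf : MemA r₀ r₁ B a f) (hg : MemA r₀ r₁ B a g) (H : DerA r₀ r₁ N a f g) :
    CtsA r₀ r₁ N a f := fun r hr => (H r hr).cts (S.norm r hr) (hf r hr) (hg r hr)

/-- Uniqueness. -/
theorem Sc.uniq (S : Sc r₀ r₁ B N T R C F) {a : ℝ} (ha : 0 < a) (haT : a ≤ T)
    (haC : 32 * C * a ≤ 1) {u v : ℝ → X} (u0 : u 0 = 0) (v0 : v 0 = 0)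
    (hu : MemA r₀ r₁ B a u) (hub : BdA r₀ r₁ N R a u)
    (hv : MemA r₀ r₁ B a v) (hvb : BdA r₀ r₁ N R a v)
    (hdu : DerA r₀ r₁ N a u (fun t => F t (u t)))
    (hdv : DerA r₀ r₁ N a v (fun t => F t (v t))) :
    ∀ t : ℝ, |t| < a * (r₁ - r₀) → u t = v t := by
  have hFu := S.F_mem ha haT hu hub
  have hFv := S.F_mem ha haT hv hvb
  have hz := hu.sub hv
  have hd := S.DerA_sub hu hFu hv hFv hdu hdv
  have hC := S.hC
  have hR := S.hR
  have z0 : (fun t => u t - v t) 0 = 0 := by simp [u0, v0]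
  have base : WtA r₀ r₁ N R a (fun t => u t - v t) := by
    intro r hr t ht
    refine mvN (S.norm r hr) (hz r hr) (hFu.sub hFv r hr) (hd r hr) z0 (fun s hs => ?_) ht
    obtain ⟨r', hr', hlt, hs', e1, e2⟩ := room ha hr hs
    have h1 := S.Flip r r' hr.1 hlt hr'.2 s (S.tmem ha haT hr hs) _ (hu r' hr' s hs') _
      (hv r' hr' s hs') (hub r' hr' s hs').le (hvb r' hr' s hs').le
    have h2 := (S.norm r' hr').sub (hu r' hr' s hs') (hv r' hr' s hs')
    have h3 := hub r' hr' s hs'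
    have h4 := hvb r' hr' s hs'
    rw [e1] at h1
    set D := a * (r₁ - r) with hD
    have hp : 0 < D - |s| := by linarith
    have hs0 := abs_nonneg s
    refine h1.trans ?_
    calc C / ((D - |s|) / (2 * a)) * N r' (u s - v s)
        ≤ C / ((D - |s|) / (2 * a)) * (2 * R) := by
          gcongr
          linarith
      _ = (4 * C * a) * (R * ((D - |s|) / (D - |s|) ^ 2)) := by
          field_simp; ring
      _ ≤ 1 * (R * (D / (D - |s|) ^ 2)) := by
          gcongr
          · nlinarith [mul_pos hC ha]
          · linarith
      _ = R * (D / (D - |s|) ^ 2) := one_mul _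
  have iter : ∀ n : ℕ, WtA r₀ r₁ N (R * (1 / 2) ^ n) a (fun t => u t - v t) := by
    intro n
    induction n with
    | zero => simpa using base
    | succ n ih =>
      refine (S.contr ha haT (by positivity) hu hub hv hvb hz z0 hd ih).mono le_rfl ?_
        (by positivity)
      have : 0 ≤ R * (1 / 2 : ℝ) ^ n := by positivity
      rw [pow_succ]
      nlinarith
  intro t ht
  have h0 : r₀ ∈ Icc r₀ r₁ := ⟨le_rfl, S.h01⟩
  have hle : N r₀ (u t - v t) ≤ 0 := by
    have tz : Filter.Tendsto (fun n : ℕ => R * (1 / 2 : ℝ) ^ n * (|t| / (a * (r₁ - r₀) - |t|)))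
        Filter.atTop (nhds 0) := by
      have := ((tendsto_pow_atTop_nhds_zero_of_lt_one (r := (1 / 2 : ℝ)) (by norm_num)
        (by norm_num)).const_mul R).mul_const (|t| / (a * (r₁ - r₀) - |t|))
      simpa using this
    exact ge_of_tendsto' tz fun n => iter n r₀ h0 t ht
  have n0 := S.norm r₀ h0
  have hm := hz r₀ h0 t ht
  exact sub_eq_zero.1 ((n0.eq_zero _ hm).1 (le_antisymm hle (n0.nonneg _ hm)))

structure Pic (r₀ r₁ : ℝ) (B : ℝ → Submodule ℝ X) (N : ℝ → X → ℝ) (R M : ℝ)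
    (F : ℝ → X → X) (δ : ℝ) (k : ℕ) (u w : ℝ → X) : Prop where
  u0 : u 0 = 0
  um : MemA r₀ r₁ B (δ * (1 + (1 / 2) ^ k)) u
  ub : ∀ r ∈ Icc r₀ r₁, ∀ t : ℝ, |t| < (δ * (1 + (1 / 2) ^ k)) * (r₁ - r) →
    N r (u t) ≤ R / 2 * (1 - (1 / 2) ^ k)
  w0 : w 0 = 0
  wm : MemA r₀ r₁ B (δ * (1 + (1 / 2) ^ k)) w
  wd : DerA r₀ r₁ N (δ * (1 + (1 / 2) ^ k)) w (fun t => F t (u t))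
  wt : WtA r₀ r₁ N (2 * M * δ * ((1 / 2) ^ k) ^ 2) (δ * (1 + (1 / 2) ^ k)) (fun t => w t - u t)

theorem Pic.bd {M δ : ℝ} (hR : 0 < R) {k : ℕ} {u w : ℝ → X} (P : Pic r₀ r₁ B N R M F δ k u w) :
    BdA r₀ r₁ N R (δ * (1 + (1 / 2) ^ k)) u := by
  intro r hr t ht
  have h := P.ub r hr t ht
  have : (0 : ℝ) < (1 / 2) ^ k := by positivity
  nlinarith

theorem Pic.step_le {M δ : ℝ} (hM : 0 < M) (hδ : 0 < δ) (hδM : 32 * M * δ ≤ R)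
    {k : ℕ} {u w : ℝ → X} (P : Pic r₀ r₁ B N R M F δ k u w)
    {r : ℝ} (hr : r ∈ Icc r₀ r₁) {t : ℝ} (ht : |t| < (δ * (1 + (1 / 2) ^ (k + 1))) * (r₁ - r)) :
    N r (w t - u t) ≤ R / 4 * (1 / 2) ^ k := by
  have hx : (0 : ℝ) < (1 / 2) ^ k := by positivity
  have hx1 : (1 / 2 : ℝ) ^ k ≤ 1 := pow_le_one₀ (by norm_num) (by norm_num)
  rw [pow_succ] at ht
  have hw := P.wt r hr t
  generalize (1 / 2 : ℝ) ^ k = x at *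
  have hρ : 0 ≤ r₁ - r := by linarith [hr.2]
  have hδρ : 0 ≤ δ * (r₁ - r) := by positivity
  have e : δ * (1 + x) * (r₁ - r) = δ * (1 + x * (1 / 2)) * (r₁ - r) + x / 2 * (δ * (r₁ - r)) := by
    ring
  have h1 : δ * (1 + x * (1 / 2)) * (r₁ - r) ≤ 2 * (δ * (r₁ - r)) := by nlinarith
  have hp : 0 < δ * (1 + x) * (r₁ - r) - |t| := by nlinarith
  have h2 : |t| / (δ * (1 + x) * (r₁ - r) - |t|) ≤ 4 / x := by
    rw [div_le_div_iff₀ hp hx]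
    nlinarith
  refine (hw (by linarith)).trans ?_
  calc 2 * M * δ * x ^ 2 * (|t| / (δ * (1 + x) * (r₁ - r) - |t|))
      ≤ 2 * M * δ * x ^ 2 * (4 / x) := by gcongr
    _ = (32 * M * δ) * (1 / 4 * x) := by field_simp; ring
    _ ≤ R * (1 / 4 * x) := by gcongr
    _ = R / 4 * x := by ring

theorem Sc.pic_step (S : Sc r₀ r₁ B N T R C F) {M δ : ℝ} (hM : 0 < M) (hδ : 0 < δ)
    (hδT : 2 * δ ≤ T) (hδC : 32 * C * δ ≤ 1) (hδM : 32 * M * δ ≤ R)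
    {k : ℕ} {u w : ℝ → X} (P : Pic r₀ r₁ B N R M F δ k u w) :
    ∃ w', Pic r₀ r₁ B N R M F δ (k + 1) w w' := by
  have hC := S.hC
  have hx : (0 : ℝ) < (1 / 2) ^ k := by positivity
  have hx1 : (1 / 2 : ℝ) ^ k ≤ 1 := pow_le_one₀ (by norm_num) (by norm_num)
  have hxs : (1 / 2 : ℝ) ^ (k + 1) = (1 / 2) ^ k / 2 := by rw [pow_succ]; ring
  have hle : δ * (1 + (1 / 2) ^ (k + 1)) ≤ δ * (1 + (1 / 2 : ℝ) ^ k) := by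
    rw [hxs]; exact mul_le_mul_of_nonneg_left (by linarith) hδ.le
  have ha : 0 < δ * (1 + (1 / 2 : ℝ) ^ k) := by positivity
  have ha' : 0 < δ * (1 + (1 / 2 : ℝ) ^ (k + 1)) := by positivity
  have ha2 : δ * (1 + (1 / 2 : ℝ) ^ k) ≤ 2 * δ := by nlinarith
  have haT : δ * (1 + (1 / 2 : ℝ) ^ k) ≤ T := by linarith
  have haT' : δ * (1 + (1 / 2 : ℝ) ^ (k + 1)) ≤ T := by linarith
  have ub := P.bd S.hR
  have hFu := S.F_mem ha haT P.um ub
  have wm := P.wm.mono hle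
  have wc := S.DerA_cts wm (hFu.mono hle) (P.wd.mono hle)
  have wub : ∀ r ∈ Icc r₀ r₁, ∀ t : ℝ, |t| < (δ * (1 + (1 / 2) ^ (k + 1))) * (r₁ - r) →
      N r (w t) ≤ R / 2 * (1 - (1 / 2) ^ (k + 1)) := by
    intro r hr t ht
    have h1 := P.step_le hM hδ hδM hr ht
    have ht' := ht.trans_le (ale hle hr)
    have h2 := P.ub r hr t ht'
    have h3 := (S.norm r hr).add _ ((B r).sub_mem (P.wm r hr t ht') (P.um r hr t ht')) _
      (P.um r hr t ht')
    rw [sub_add_cancel] at h3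
    rw [hxs]
    linarith
  have wb : BdA r₀ r₁ N R (δ * (1 + (1 / 2) ^ (k + 1))) w := by
    intro r hr t ht
    have h := wub r hr t ht
    have : (0 : ℝ) < (1 / 2) ^ (k + 1) := by positivity
    have := S.hR
    nlinarith
  have hFw := S.F_mem ha' haT' wm wb
  obtain ⟨w', w0', wm', wd'⟩ := S.prim ha' hFw (S.F_cts ha' haT' wm wb wc)
  refine ⟨w', P.w0, wm, wub, w0', wm', wd', ?_⟩
  have hd := S.DerA_sub wm' hFw wm (hFu.mono hle) wd' (P.wd.mono hle)
  have hK : 0 ≤ 2 * M * δ * ((1 / 2) ^ k) ^ 2 := by positivity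
  refine (S.contr ha' haT' hK wm wb (P.um.mono hle) (ub.mono hle) (wm'.sub wm)
    (by simp [w0', P.w0]) hd (P.wt.mono hle le_rfl hK)).mono le_rfl ?_ (by positivity)
  rw [show 2 * M * δ * ((1 / 2 : ℝ) ^ (k + 1)) ^ 2 = 1 / 4 * (2 * M * δ * ((1 / 2) ^ k) ^ 2) by
    rw [hxs]; ring]
  refine mul_le_mul_of_nonneg_right ?_ hK
  nlinarith

theorem Sc.pic_zero (S : Sc r₀ r₁ B N T R C F) {M δ : ℝ} (hM : 0 < M) (hδ : 0 < δ)
    (hδT : 2 * δ ≤ T)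
    (hF0 : ∀ r : ℝ, r₀ ≤ r → r < r₁ → ∀ t ∈ Icc (-T) T, N r (F t 0) ≤ M / (r₁ - r)) :
    ∃ w, Pic r₀ r₁ B N R M F δ 0 (fun _ => 0) w := by
  have um : MemA r₀ r₁ B (2 * δ) (fun _ => 0) := fun r hr t ht => (B r).zero_mem
  have ub : BdA r₀ r₁ N R (2 * δ) (fun _ => 0) := fun r hr t ht => by
    rw [(S.norm r hr).zero]; exact S.hR
  have uc : CtsA r₀ r₁ N (2 * δ) (fun _ => 0) := fun r hr t ht ε hε => by
    refine ⟨1, one_pos, fun s _ _ => ?_⟩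
    rw [sub_self, (S.norm r hr).zero]; exact hε
  have h2 : 0 < 2 * δ := by linarith
  have hF := S.F_mem h2 hδT um ub
  obtain ⟨w, w0, wm, wd⟩ := S.prim h2 hF (S.F_cts h2 hδT um ub uc)
  have e : δ * (1 + (1 / 2 : ℝ) ^ 0) = 2 * δ := by rw [pow_zero]; ring
  refine ⟨w, rfl, by rwa [e], ?_, w0, by rwa [e], by rwa [e], ?_⟩
  · intro r hr t ht
    rw [(S.norm r hr).zero]; simp
  · rw [e]
    intro r hr t ht
    simp only [sub_zero, pow_zero, one_pow, mul_one]
    refine mvN (S.norm r hr) (wm r hr) (hF r hr) (wd r hr) w0 (fun s hs => ?_) ht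
    have hs0 := abs_nonneg s
    have hlt : 0 < r₁ - r := by
      by_contra hcon
      have : 2 * δ * (r₁ - r) ≤ 0 := mul_nonpos_of_nonneg_of_nonpos h2.le (by linarith)
      linarith
    refine (hF0 r hr.1 (by linarith) s (S.tmem h2 hδT hr hs)).trans ?_
    have hp : 0 < 2 * δ * (r₁ - r) - |s| := by linarith
    calc M / (r₁ - r) = 2 * M * δ * (2 * δ * (r₁ - r) / (2 * δ * (r₁ - r)) ^ 2) := by
          field_simp
      _ ≤ _ := by
          gcongr
          linarith

theorem Sc.exist (S : Sc r₀ r₁ B N T R C F) {M δ : ℝ} (hM : 0 < M) (hδ : 0 < δ)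
    (hδT : 2 * δ ≤ T) (hδC : 32 * C * δ ≤ 1) (hδM : 32 * M * δ ≤ R)
    (hF0 : ∀ r : ℝ, r₀ ≤ r → r < r₁ → ∀ t ∈ Icc (-T) T, N r (F t 0) ≤ M / (r₁ - r)) :
    ∃ u : ℝ → X, u 0 = 0 ∧ MemA r₀ r₁ B δ u ∧
      (∀ r ∈ Icc r₀ r₁, ∀ t : ℝ, |t| < δ * (r₁ - r) → N r (u t) ≤ R / 2) ∧
      DerA r₀ r₁ N δ u (fun t => F t (u t)) := by
  have hR := S.hR
  have hC := S.hC
  obtain ⟨w, hw⟩ := S.pic_zero hM hδ hδT hF0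
  have step : ∀ k (p : (ℝ → X) × (ℝ → X)), Pic r₀ r₁ B N R M F δ k p.1 p.2 →
      ∃ w', Pic r₀ r₁ B N R M F δ (k + 1) p.2 w' := fun k p P =>
    S.pic_step hM hδ hδT hδC hδM P
  choose! nxt hnxt using step
  let p : ℕ → (ℝ → X) × (ℝ → X) := fun n =>
    Nat.rec (fun _ => 0, w) (fun k q => (q.2, nxt k q)) n
  have hp : ∀ k, Pic r₀ r₁ B N R M F δ k (p k).1 (p k).2 := by
    intro k
    induction k with
    | zero => exact hw
    | succ k ih => exact hnxt k (p k) ih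
  obtain ⟨U, hU0, hU⟩ : ∃ U : ℕ → ℝ → X, (U 0 = fun _ => 0) ∧
      ∀ k, Pic r₀ r₁ B N R M F δ k (U k) (U (k + 1)) :=
    ⟨fun k => (p k).1, rfl, hp⟩
  have hle : ∀ k : ℕ, δ ≤ δ * (1 + (1 / 2 : ℝ) ^ k) := fun k => by
    have : (0 : ℝ) < (1 / 2) ^ k := by positivity
    nlinarith
  have hUm : ∀ k, MemA r₀ r₁ B δ (U k) := fun k => (hU k).um.mono (hle k)
  have hUb : ∀ k, BdA r₀ r₁ N R δ (U k) := fun k => ((hU k).bd hR).mono (hle k)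
  have h0 : r₀ ∈ Icc r₀ r₁ := ⟨le_rfl, S.h01⟩
  have tz : ∀ c : ℝ, Filter.Tendsto (fun n : ℕ => c / (2 : ℝ) ^ n) Filter.atTop (nhds 0) := by
    intro c
    have := (tendsto_pow_atTop_nhds_zero_of_lt_one (r := (1 / 2 : ℝ)) (by norm_num)
      (by norm_num)).const_mul c
    simpa [div_eq_mul_inv] using this
  have lim : ∀ r ∈ Icc r₀ r₁, ∀ t, |t| < δ * (r₁ - r) →
      ∃ l ∈ B r, ∀ n, N r (U n t - l) ≤ (R / 2) / 2 ^ n := by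
    intro r hr t ht
    refine geom_lim (S.norm r hr) (fun n => hUm n r hr t ht) fun n => ?_
    refine ((hU n).step_le hM hδ hδM hr (ht.trans_le (ale (hle _) hr))).trans (le_of_eq ?_)
    rw [div_pow, one_pow]; ring
  have limt : ∀ t : ℝ, ∃ l : X, (t = 0 → l = 0) ∧ ∀ r ∈ Icc r₀ r₁, |t| < δ * (r₁ - r) →
      l ∈ B r ∧ ∀ n, N r (U n t - l) ≤ (R / 2) / 2 ^ n := by
    intro t
    by_cases t0 : t = 0
    · refine ⟨0, fun _ => rfl, fun r hr ht => ⟨(B r).zero_mem, fun n => ?_⟩⟩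
      rw [t0, (hU n).u0, sub_zero, (S.norm r hr).zero]; positivity
    by_cases ht : |t| < δ * (r₁ - r₀)
    · obtain ⟨l, hl, hl'⟩ := lim r₀ h0 t ht
      refine ⟨l, fun h => absurd h t0, fun r hr htr => ?_⟩
      obtain ⟨m, hm, hm'⟩ := lim r hr t htr
      have n0 := S.norm r₀ h0
      have hm0 := S.Ble hr hm
      have e : N r₀ (l - m) ≤ 0 := by
        refine ge_of_tendsto' (tz R) fun n => ?_
        have h1 := n0.tri hl (hUm n r₀ h0 t ht) hm0
        have h2 := hl' n
        rw [n0.comm (hUm n r₀ h0 t ht) hl] at h2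
        have h3 := (S.Nle hr ((B r).sub_mem (hUm n r hr t htr) hm)).trans (hm' n)
        have : R / 2 ^ n = R / 2 / 2 ^ n + R / 2 / 2 ^ n := by ring
        linarith
      have hlm := (B r₀).sub_mem hl hm0
      have := sub_eq_zero.1 ((n0.eq_zero _ hlm).1 (le_antisymm e (n0.nonneg _ hlm)))
      rw [this]
      exact ⟨hm, hm'⟩
    · refine ⟨0, fun _ => rfl, fun r hr htr => absurd (htr.trans_le ?_) ht⟩
      have := hr.1
      gcongr
  choose u hu0 hu using limt
  have um : MemA r₀ r₁ B δ u := fun r hr t ht => (hu t r hr ht).1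
  have ub : ∀ r ∈ Icc r₀ r₁, ∀ t : ℝ, |t| < δ * (r₁ - r) → N r (u t) ≤ R / 2 := by
    intro r hr t ht
    have h := (hu t r hr ht).2 0
    rw [hU0, (S.norm r hr).comm (B r).zero_mem (um r hr t ht)] at h
    simpa using h
  have ubR : BdA r₀ r₁ N R δ u := fun r hr t ht => (ub r hr t ht).trans_lt (by linarith)
  refine ⟨u, hu0 0 rfl, um, ub, fun r hr => Der.of_local fun t ht => ?_⟩
  obtain ⟨r', hr', hlt, ht', -, -⟩ := room hδ hr ht
  refine ⟨δ * (r₁ - r'), ht', ?_⟩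
  have hTle : δ ≤ T := by linarith
  have hsub : δ * (r₁ - r') ≤ δ * (r₁ - r) := by gcongr
  refine der_lim (S.norm r hr) (F := fun n => U (n + 1)) (G := fun n s => F s (U n s))
    (c := R / 2) (c' := C / (r' - r) * (R / 2))
    (fun s hs => um r hr s (by linarith))
    (fun s hs => S.F_mem hδ hTle um ubR r hr s (by linarith))
    (fun n s hs => hUm _ r hr s (by linarith))
    (fun n s hs => S.F_mem hδ hTle (hUm n) (hUb n) r hr s (by linarith))
    (fun n => (((hU n).wd.mono (hle n)) r hr).mono hsub) (fun n s hs => ?_) (fun n s hs => ?_)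
  · refine ((hu s r hr (by linarith)).2 (n + 1)).trans ?_
    rw [div_pow, one_pow, mul_one_div]
    gcongr
    · norm_num
    · omega
  · have h1 := S.Flip r r' hr.1 hlt hr'.2 s (S.tmem hδ hTle hr' hs) _ (hUm n r' hr' s hs) _
      (um r' hr' s hs) (hUb n r' hr' s hs).le (ubR r' hr' s hs).le
    refine h1.trans ?_
    have h2 := (hu s r' hr' hs).2 n
    have : 0 < r' - r := by linarith
    rw [mul_assoc, div_pow, one_pow, mul_one_div]
    gcongr

end scale

end CK

/-- **Theorem 3.1** (abstract Cauchy–Kovalevskaya theorem, Baouendi–Goulaouic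
formulation). The scale of Banach spaces is encoded by submodules `B r` of a common
vector space `X` together with norms `N r`, decreasing in `r`, each complete; `F`
satisfies the scaled Lipschitz estimate (i) and the bound (ii). The conclusion produces
`δ ∈ (0,T)` and a solution `u` of `u' = F(t,u)`, `u(0) = 0`, with `sup ‖u(t)‖_r < R` on
`|t| < δ(r₁−r)` for every `r`, differentiability being expressed through the norms `N r`;
the solution is unique on `(−δ(r₁−r₀), δ(r₁−r₀))`. -/
theorem stmt11
    (X : Type*) [AddCommGroup X] [Module ℝ X]
    (r₀ r₁ : ℝ) (hr₀ : 0 ≤ r₀) (hr₀₁ : r₀ ≤ r₁) (hr₁ : r₁ ≤ 1)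
    (B : ℝ → Submodule ℝ X) (N : ℝ → X → ℝ)
    -- `N r` is a norm on `B r`
    (hN_nonneg : ∀ r ∈ Icc r₀ r₁, ∀ u ∈ B r, 0 ≤ N r u)
    (hN_eq_zero : ∀ r ∈ Icc r₀ r₁, ∀ u ∈ B r, (N r u = 0 ↔ u = 0))
    (hN_add : ∀ r ∈ Icc r₀ r₁, ∀ u ∈ B r, ∀ v ∈ B r, N r (u + v) ≤ N r u + N r v)
    (hN_smul : ∀ r ∈ Icc r₀ r₁, ∀ c : ℝ, ∀ u ∈ B r, N r (c • u) = |c| * N r u)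
    -- decreasing scale of spaces with nonincreasing norms
    (hBmono : ∀ r' r : ℝ, r₀ ≤ r' → r' < r → r ≤ r₁ → B r ≤ B r')
    (hNmono : ∀ r' r : ℝ, r₀ ≤ r' → r' < r → r ≤ r₁ → ∀ u ∈ B r, N r' u ≤ N r u)
    -- each `(B r, N r)` is complete
    (hcomplete : ∀ r ∈ Icc r₀ r₁, ∀ u : ℕ → X, (∀ n, u n ∈ B r) →
      (∀ ε > 0, ∃ K : ℕ, ∀ p ≥ K, ∀ q ≥ K, N r (u p - u q) < ε) →
      ∃ l ∈ B r, ∀ ε > 0, ∃ K : ℕ, ∀ n ≥ K, N r (u n - l) < ε)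
    (T R C M : ℝ) (hT : 0 < T) (hR : 0 < R) (hC : 0 < C) (hM : 0 < M)
    (F : ℝ → X → X)
    -- `F` maps `[−T,T] × {u ∈ B_r : ‖u‖_r < R}` into `B_{r'}` …
    (hFmem : ∀ r' r : ℝ, r₀ ≤ r' → r' < r → r ≤ r₁ → ∀ t ∈ Icc (-T) T,
      ∀ u ∈ B r, N r u < R → F t u ∈ B r')
    -- … continuously
    (hFcont : ∀ r' r : ℝ, r₀ ≤ r' → r' < r → r ≤ r₁ → ∀ t ∈ Icc (-T) T,
      ∀ u ∈ B r, N r u < R → ∀ ε > 0, ∃ η > 0, ∀ t' ∈ Icc (-T) T, ∀ u' ∈ B r,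
        N r u' < R → |t' - t| < η → N r (u' - u) < η → N r' (F t' u' - F t u) < ε)
    -- (i) scaled Lipschitz estimate
    (hFlip : ∀ r' r : ℝ, r₀ ≤ r' → r' < r → r ≤ r₁ → ∀ t ∈ Icc (-T) T,
      ∀ u ∈ B r, ∀ v ∈ B r, N r u ≤ R → N r v ≤ R →
        N r' (F t u - F t v) ≤ C / (r - r') * N r (u - v))
    -- (ii) bound on `F(t,0)`
    (hF0 : ∀ r : ℝ, r₀ ≤ r → r < r₁ → ∀ t ∈ Icc (-T) T, N r (F t 0) ≤ M / (r₁ - r)) :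
    ∃ δ ∈ Ioo (0 : ℝ) T, ∃ u : ℝ → X,
      (u 0 = 0
        ∧ (∀ r ∈ Icc r₀ r₁, ∀ t : ℝ, |t| < δ * (r₁ - r) → u t ∈ B r)
        ∧ (∀ r ∈ Icc r₀ r₁, ∃ R' < R, ∀ t : ℝ, |t| < δ * (r₁ - r) → N r (u t) ≤ R')
        ∧ (∀ r ∈ Icc r₀ r₁, ∀ t : ℝ, |t| < δ * (r₁ - r) → ∀ ε > 0, ∃ η > 0,
            ∀ h : ℝ, h ≠ 0 → |h| < η → |t + h| < δ * (r₁ - r) →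
              N r (u (t + h) - u t - h • F t (u t)) ≤ ε * |h|))
      ∧ ∀ v : ℝ → X,
          (v 0 = 0
            ∧ (∀ r ∈ Icc r₀ r₁, ∀ t : ℝ, |t| < δ * (r₁ - r) → v t ∈ B r)
            ∧ (∀ r ∈ Icc r₀ r₁, ∃ R' < R, ∀ t : ℝ, |t| < δ * (r₁ - r) → N r (v t) ≤ R')
            ∧ (∀ r ∈ Icc r₀ r₁, ∀ t : ℝ, |t| < δ * (r₁ - r) → ∀ ε > 0, ∃ η > 0,
                ∀ h : ℝ, h ≠ 0 → |h| < η → |t + h| < δ * (r₁ - r) →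
                  N r (v (t + h) - v t - h • F t (v t)) ≤ ε * |h|)) →
          ∀ t : ℝ, |t| < δ * (r₁ - r₀) → v t = u t := by
  have S : CK.Sc r₀ r₁ B N T R C F :=
    { h01 := hr₀₁
      le1 := by linarith
      norm := fun r hr => ⟨hN_nonneg r hr, hN_eq_zero r hr, hN_add r hr, hN_smul r hr,
        hcomplete r hr⟩
      Bmono := hBmono
      Nmono := hNmono
      hC := hC
      hR := hR
      Fmem := hFmem
      Fcont := hFcont
      Flip := hFlip }
  obtain ⟨δ, hδ, h1, h2, h3⟩ : ∃ δ : ℝ, 0 < δ ∧ δ ≤ T / 2 ∧ δ ≤ 1 / (32 * C) ∧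
      δ ≤ R / (32 * M) :=
    ⟨min (T / 2) (min (1 / (32 * C)) (R / (32 * M))), by positivity, min_le_left _ _,
      (min_le_right _ _).trans (min_le_left _ _), (min_le_right _ _).trans (min_le_right _ _)⟩
  rw [le_div_iff₀ (by positivity)] at h2 h3
  have h2' : 32 * C * δ ≤ 1 := by linarith
  have h3' : 32 * M * δ ≤ R := by linarith
  obtain ⟨u, u0, um, ub, ud⟩ := S.exist hM hδ (by linarith) h2' h3' hF0
  refine ⟨δ, ⟨hδ, by linarith⟩, u, ⟨u0, um, fun r hr => ⟨R / 2, by linarith, ub r hr⟩, ud⟩, ?_⟩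
  rintro v ⟨v0, vm, vb, vd⟩
  refine S.uniq hδ (by linarith) h2' v0 u0 vm (fun r hr t ht => ?_) um
    (fun r hr t ht => (ub r hr t ht).trans_lt (by linarith)) vd ud
  obtain ⟨R', hR', H⟩ := vb r hr
  exact (H t ht).trans_lt hR'
end

section
/- Let M be a real number with 0 < M < 1, let λ_φ, λ_ψ be nonzero integers, and let θ ∈ ℝ with cos θ ≠ 1. Then it is impossible that the following three conditions hold simultaneously: M²(λ_φ + λ_ψ)² + 2λ_φλ_ψ(1 − M²)(1 − cos θ) > 0, (λ_φ + λ_ψ)(λ_φM² − λ_ψ) ≥ 0, and (λ_φ + λ_ψ)(λ_ψM² − λ_φ) ≥ 0. -/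
/-- **Section 5, incompatibility of the resonance configuration (5.5b)** for the 3D
isentropic Euler equations with Mach number `M ∈ (0,1)`: the hyperbolicity criterion (5.4)
and the two sign conditions (5.6), (5.7) cannot hold simultaneously. -/
theorem stmt18 (M : ℝ) (hM₀ : 0 < M) (hM₁ : M < 1)
    (lφ lψ : ℤ) (hlφ : lφ ≠ 0) (hlψ : lψ ≠ 0)
    (θ : ℝ) (hθ : Real.cos θ ≠ 1) :
    ¬ (0 < M ^ 2 * ((lφ : ℝ) + (lψ : ℝ)) ^ 2
          + 2 * (lφ : ℝ) * (lψ : ℝ) * (1 - M ^ 2) * (1 - Real.cos θ)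
        ∧ 0 ≤ ((lφ : ℝ) + (lψ : ℝ)) * ((lφ : ℝ) * M ^ 2 - (lψ : ℝ))
        ∧ 0 ≤ ((lφ : ℝ) + (lψ : ℝ)) * ((lψ : ℝ) * M ^ 2 - (lφ : ℝ))) := by
  rintro ⟨h1, h2, h3⟩
  have hM : 0 < 1 - M ^ 2 := by nlinarith
  have hs : ((lφ : ℝ) + (lψ : ℝ)) = 0 := by
    by_contra hne
    have hpos : 0 < ((lφ : ℝ) + (lψ : ℝ)) ^ 2 := by positivity
    have := mul_pos hpos hM
    nlinarith
  have hb : (lψ : ℝ) = -(lφ : ℝ) := by linarith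
  have hc : 0 ≤ 1 - Real.cos θ := by linarith [Real.cos_le_one θ]
  have hp : 0 ≤ (lφ : ℝ) ^ 2 * (1 - M ^ 2) * (1 - Real.cos θ) :=
    mul_nonneg (mul_nonneg (sq_nonneg _) hM.le) hc
  rw [hb] at h1
  nlinarith
end

section
/- Let v₀ > 0, u₀ > 0, c₀ > 0 and μ₁, μ₂, μ₃ ∈ ℝ. Then the following are equivalent: (i) for every θ ∈ ℝ, the three vectors of ℝ³ given by (v₀, c₀cos θ, c₀sin θ), (μ₁u₀, c₀cos θ + μ₂u₀, c₀sin θ + μ₃u₀) and (0, c₀sin θ, −c₀cos θ) are linearly dependent; (ii) μ₁ = v₀/u₀, μ₂ = 0 and μ₃ = 0. -/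
/-- **Section 5, determination of the boundary matrix `B`** for the 3D isentropic Euler
equations at the subsonic equilibrium: the images under `B = (e₁ e₂ e₃ b₄)`,
`b₄ = μ₁e₁ + μ₂e₂ + μ₃e₃`, of the basis of the stable subspace `E₋(ζ)` at
`ζ = (c₀, cos θ, sin θ)` are linearly dependent for every `θ` if and only if
`μ₁ = v₀/u₀`, `μ₂ = 0`, `μ₃ = 0`. -/
theorem stmt19 (v₀ u₀ c₀ : ℝ) (hv₀ : 0 < v₀) (hu₀ : 0 < u₀) (hc₀ : 0 < c₀)
    (μ₁ μ₂ μ₃ : ℝ) :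
    (∀ θ : ℝ, ¬ LinearIndependent ℝ
        ![![v₀, c₀ * Real.cos θ, c₀ * Real.sin θ],
          ![μ₁ * u₀, c₀ * Real.cos θ + μ₂ * u₀, c₀ * Real.sin θ + μ₃ * u₀],
          ![0, c₀ * Real.sin θ, -(c₀ * Real.cos θ)]])
      ↔ (μ₁ = v₀ / u₀ ∧ μ₂ = 0 ∧ μ₃ = 0) := by
  have key : ∀ θ : ℝ, (¬ LinearIndependent ℝ
        ![![v₀, c₀ * Real.cos θ, c₀ * Real.sin θ],
          ![μ₁ * u₀, c₀ * Real.cos θ + μ₂ * u₀, c₀ * Real.sin θ + μ₃ * u₀],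
          ![0, c₀ * Real.sin θ, -(c₀ * Real.cos θ)]]) ↔
      c₀ * (μ₁ * u₀ - v₀) = v₀ * u₀ * (μ₂ * Real.cos θ + μ₃ * Real.sin θ) := by
    intro θ
    have h := Matrix.linearIndependent_rows_iff_isUnit
      (A := !![v₀, c₀ * Real.cos θ, c₀ * Real.sin θ;
          μ₁ * u₀, c₀ * Real.cos θ + μ₂ * u₀, c₀ * Real.sin θ + μ₃ * u₀;
          0, c₀ * Real.sin θ, -(c₀ * Real.cos θ)])
    rw [Matrix.isUnit_iff_isUnit_det, isUnit_iff_ne_zero, Matrix.det_fin_three] at h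
    refine (not_congr h).trans ?_
    rw [not_not]
    simp only [Matrix.of_apply, Matrix.cons_val', Matrix.cons_val_zero, Matrix.cons_val_one,
      Matrix.cons_val]
    have hs := Real.sin_sq_add_cos_sq θ
    constructor
    · intro e
      apply mul_left_cancel₀ hc₀.ne'
      linear_combination e + c₀ ^ 2 * (v₀ - μ₁ * u₀) * hs
    · intro e
      linear_combination c₀ * e - c₀ ^ 2 * (v₀ - μ₁ * u₀) * hs
  simp only [key]
  have hp : v₀ * u₀ ≠ 0 := (mul_pos hv₀ hu₀).ne'
  constructor
  · intro h
    have h0 := h 0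
    have h1 := h Real.pi
    have h2 := h (Real.pi / 2)
    simp only [Real.cos_zero, Real.sin_zero, Real.cos_pi, Real.sin_pi, Real.cos_pi_div_two,
      Real.sin_pi_div_two] at h0 h1 h2
    have a : c₀ * (μ₁ * u₀ - v₀) = 0 := by linear_combination (h0 + h1) / 2
    have b : v₀ * u₀ * μ₂ = 0 := by linear_combination a - h0
    have c : v₀ * u₀ * μ₃ = 0 := by linear_combination a - h2
    refine ⟨?_, (mul_eq_zero.mp b).resolve_left hp, (mul_eq_zero.mp c).resolve_left hp⟩
    rw [eq_div_iff hu₀.ne']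
    linarith [(mul_eq_zero.mp a).resolve_left hc₀.ne']
  · rintro ⟨rfl, rfl, rfl⟩ θ
    rw [div_mul_cancel₀ _ hu₀.ne']
    ring
end
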